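/- arXiv:0809.0086 — 3 statements merged into one kernel-verified Lean document; each statement's English description precedes it below -/
import Mathlib

section
/- Let R be a commutative ring, n a positive integer, and A = (a_{ij}) an invertible symmetric n×n matrix over R with inverse (a^{ij}). Define D_i on R[x_1,…,x_n] by D_i(g) = Σ_j a^{ij} ∂g/∂x_j + x_i·g. Then D_1,…,D_n form a regular sequence of commuting operators on R[x_1,…,x_n]: for each 0 ≤ s < n, the operator induced by D_{s+1} on the quotient R[x_1,…,x_n] / (D_1(R[x_1,…,x_n]) + ⋯ + D_s(R[x_1,…,x_n])) is injective; equivalently, if D_{s+1}(g) ∈ D_1(R[x]) + ⋯ + D_s(R[x]) then g ∈ D_1(R[x]) + ⋯ + D_s(R[x]). -/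
open MvPolynomial

noncomputable section

/-- The operator `D_i(g) = Σ_j a^{ij} ∂g/∂x_j + x_i·g` on `R[x_1,…,x_n]`,
where `B = (a^{ij})` is the inverse matrix of `A`. -/
def Dop {n : ℕ} {R : Type*} [CommRing R] (B : Matrix (Fin n) (Fin n) R)
    (i : Fin n) (g : MvPolynomial (Fin n) R) : MvPolynomial (Fin n) R :=
  (∑ j, C (B i j) * pderiv j g) + X i * g

/-- The `R`-submodule `D_1(R[x]) + ⋯ + D_s(R[x])` of `R[x_1,…,x_n]` generated by
the images of the operators `D_i` for `i < s` (indices `0,…,s-1` of `Fin n`). -/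
def DopSpan {n : ℕ} {R : Type*} [CommRing R] (B : Matrix (Fin n) (Fin n) R)
    (s : ℕ) : Submodule R (MvPolynomial (Fin n) R) :=
  Submodule.span R
    {p | ∃ (i : Fin n) (g : MvPolynomial (Fin n) R), (i : ℕ) < s ∧ p = Dop B i g}

/-!
On monomials `exp(½ Σ b_{ij} ∂_i ∂_j)` has integral coefficients in the `b_{ij}`, so it exists over
every commutative ring, and it is invertible because `B` may be replaced by `-B`. It conjugates
multiplication by `x_i` into `D_i = Σ_j b_{ij} ∂_j + x_i`, so `D_1, D_2, …` form a regular sequence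
because `x_1, x_2, …` do.
-/

section CommutingOperators

variable {R A σ : Type*} [CommSemiring R] [Semiring A] [Algebra R A]

open scoped IsMulCommutative in
/-- Evaluation of multivariate polynomials at a family of commuting elements of an algebra that need
not be commutative; it factors through the commutative subalgebra generated by the family. -/
def aevalOfCommute (f : σ → A) (hf : ∀ i j, Commute (f i) (f j)) : MvPolynomial σ R →ₐ[R] A :=
  haveI : IsMulCommutative (Algebra.adjoin R (Set.range f)) :=
    Algebra.isMulCommutative_adjoin R <| by
      rintro _ ⟨i, rfl⟩ _ ⟨j, rfl⟩
      exact hf i j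
  (Algebra.adjoin R (Set.range f)).val.comp
    (aeval fun i => ⟨f i, Algebra.subset_adjoin ⟨i, rfl⟩⟩)

@[simp]
lemma aevalOfCommute_X (f : σ → A) (hf : ∀ i j, Commute (f i) (f j)) (i : σ) :
    aevalOfCommute (R := R) f hf (X i) = f i := by
  simp [aevalOfCommute]

end CommutingOperators

lemma restrictScalars_span_image_eq_iSup_range_mulLeft {R A ι : Type*} [CommSemiring R]
    [CommSemiring A] [Algebra R A] (f : ι → A) (S : Set ι) :
    (Ideal.span (f '' S)).restrictScalars R = ⨆ i ∈ S, (LinearMap.mulLeft R (f i)).range := by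
  have range_mulLeft (a : A) :
      (Ideal.span {a}).restrictScalars R = (LinearMap.mulLeft R a).range := by
    ext b
    simp [Ideal.mem_span_singleton, dvd_def, eq_comm]
  rw [Ideal.span, Submodule.span_eq_iSup_of_singleton_spans, iSup_image]
  simp_rw [Submodule.restrictScalars_iSup, ← range_mulLeft]

section Variables

variable {R σ : Type*} [CommSemiring R]

lemma mem_ideal_span_X_image_of_X_mul_mem {S : Set σ} {k : σ} (hk : k ∉ S)
    {p : MvPolynomial σ R} (hp : X k * p ∈ Ideal.span (X '' S : Set (MvPolynomial σ R))) :
    p ∈ Ideal.span (X '' S : Set (MvPolynomial σ R)) := by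
  rw [mem_ideal_span_X_image] at hp ⊢
  intro m hm
  obtain ⟨i, hi, hmi⟩ := hp (Finsupp.single k 1 + m) (by
    rwa [mem_support_iff, coeff_X_mul, ← mem_support_iff])
  have hki : k ≠ i := fun h => hk (h ▸ hi)
  exact ⟨i, hi, by simpa [Finsupp.single_apply, hki] using hmi⟩

lemma eq_id_of_map_X_mul {F : MvPolynomial σ R →ₗ[R] MvPolynomial σ R} (h_one : F 1 = 1)
    (h_X : ∀ i p, F (X i * p) = X i * F p) : F = LinearMap.id := by
  refine LinearMap.ext fun p => ?_
  induction p using MvPolynomial.induction_on with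
  | C a => rw [← mul_one (C a), ← smul_eq_C_mul, map_smul, h_one, LinearMap.id_apply]
  | add p q hp hq => rw [map_add, hp, hq, map_add]
  | mul_X p i hp => rw [mul_comm, h_X, hp, LinearMap.id_apply, LinearMap.id_apply]

end Variables

section ConstantCoefficients

variable {R σ : Type*} [CommRing R]

/-- The derivative `Σ_j v_j ∂/∂x_j` in the direction of a constant vector `v`. Prescribing its
values on the variables gives it a meaning even if there are infinitely many of them. -/
def directionalDerivation (v : σ → R) : Derivation R (MvPolynomial σ R) (MvPolynomial σ R) :=
  mkDerivation R fun j => C (v j)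

@[simp]
lemma directionalDerivation_X (v : σ → R) (j : σ) : directionalDerivation v (X j) = C (v j) :=
  mkDerivation_X R _ j

lemma directionalDerivation_X_mul (v : σ → R) (j : σ) (p : MvPolynomial σ R) :
    directionalDerivation v (X j * p) = X j * directionalDerivation v p + v j • p := by
  simp [smul_eq_C_mul, mul_comm p]

lemma directionalDerivation_eq_sum_pderiv [Fintype σ] (v : σ → R) (p : MvPolynomial σ R) :
    directionalDerivation v p = ∑ j, C (v j) * pderiv j p := by
  classical
  have sum_apply (q : MvPolynomial σ R) :
      (∑ j, v j • pderiv (R := R) j) q = ∑ j, C (v j) * pderiv j q := by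
    rw [← Derivation.coeFnAddMonoidHom_apply, map_sum, Finset.sum_apply]
    simp [smul_eq_C_mul]
  have eq_sum : directionalDerivation v = ∑ j, v j • pderiv j := by
    ext1 k
    simp [sum_apply, pderiv_X, Pi.single_apply]
  rw [eq_sum, sum_apply]

lemma directionalDerivation_zero :
    directionalDerivation (0 : σ → R) = 0 := by
  ext; simp

lemma directionalDerivation_add (v w : σ → R) :
    directionalDerivation (v + w) = directionalDerivation v + directionalDerivation w := by
  ext; simp

lemma directionalDerivation_comm (v w : σ → R) (p : MvPolynomial σ R) :
    directionalDerivation v (directionalDerivation w p) =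
      directionalDerivation w (directionalDerivation v p) := by
  have lie_eq_zero : ⁅directionalDerivation v, directionalDerivation w⁆ = 0 := by
    ext1 j
    simp [Derivation.commutator_apply]
  simpa [Derivation.commutator_apply, sub_eq_zero] using DFunLike.congr_fun lie_eq_zero p

end ConstantCoefficients

section TwistedOperators

variable {R σ : Type*} [CommRing R]

/-- The operator `D_i = Σ_j b_{ij} ∂/∂x_j + x_i` on polynomials in an arbitrary family of
variables. -/
def twistedOperator (B : Matrix σ σ R) (i : σ) : Module.End R (MvPolynomial σ R) :=
  (directionalDerivation (B i)).toLinearMap + LinearMap.mulLeft R (X i)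

lemma twistedOperator_apply (B : Matrix σ σ R) (i : σ) (p : MvPolynomial σ R) :
    twistedOperator B i p = directionalDerivation (B i) p + X i * p :=
  rfl

lemma twistedOperator_zero (i : σ) :
    twistedOperator (0 : Matrix σ σ R) i = LinearMap.mulLeft R (X i) := by
  refine LinearMap.ext fun p => ?_
  have row_zero : (0 : Matrix σ σ R) i = 0 := rfl
  simp [twistedOperator_apply, row_zero, directionalDerivation_zero]

lemma commute_twistedOperator {B : Matrix σ σ R} (hB : B.IsSymm) (i j : σ) :
    Commute (twistedOperator B i) (twistedOperator B j) := by
  refine LinearMap.ext fun p => ?_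
  simp only [Module.End.mul_apply, twistedOperator_apply, map_add, directionalDerivation_X_mul,
    directionalDerivation_comm (B i) (B j), hB.apply i j]
  ring

lemma directionalDerivation_twistedOperator (B : Matrix σ σ R) (v : σ → R) (i : σ)
    (p : MvPolynomial σ R) :
    directionalDerivation v (twistedOperator B i p) =
      twistedOperator B i (directionalDerivation v p) + v i • p := by
  simp only [twistedOperator_apply, map_add, directionalDerivation_X_mul,
    directionalDerivation_comm v, add_assoc]

/-- The operator `exp(½ Σ b_{ij} ∂_i ∂_j)`, which solves the heat equation attached to `B`. It is
encoded as `p ↦ p(D_1, D_2, …) 1`, which makes sense without dividing by integers. -/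
def heatTransform {B : Matrix σ σ R} (hB : B.IsSymm) : Module.End R (MvPolynomial σ R) :=
  LinearMap.applyₗ 1 ∘ₗ
    (aevalOfCommute (twistedOperator B) (commute_twistedOperator hB)).toLinearMap

lemma heatTransform_one {B : Matrix σ σ R} (hB : B.IsSymm) : heatTransform hB 1 = 1 := by
  simp [heatTransform]

lemma heatTransform_X_mul {B : Matrix σ σ R} (hB : B.IsSymm) (i : σ) (p : MvPolynomial σ R) :
    heatTransform hB (X i * p) = twistedOperator B i (heatTransform hB p) := by
  simp [heatTransform]

lemma heatTransform_directionalDerivation {B : Matrix σ σ R} (hB : B.IsSymm) (v : σ → R)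
    (p : MvPolynomial σ R) :
    heatTransform hB (directionalDerivation v p) =
      directionalDerivation v (heatTransform hB p) := by
  induction p using MvPolynomial.induction_on with
  | C a =>
    have map_C : heatTransform hB (C a) = C a := by
      rw [← mul_one (C a), ← smul_eq_C_mul, map_smul, heatTransform_one]
    simp [map_C]
  | add p q hp hq => simp only [map_add, hp, hq]
  | mul_X p i hp =>
    rw [mul_comm, directionalDerivation_X_mul, map_add, map_smul, heatTransform_X_mul,
      heatTransform_X_mul, hp, directionalDerivation_twistedOperator]

lemma heatTransform_twistedOperator {B : Matrix σ σ R} (hB : B.IsSymm) (B' : Matrix σ σ R) (i : σ)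
    (p : MvPolynomial σ R) :
    heatTransform hB (twistedOperator B' i p) =
      twistedOperator (B + B') i (heatTransform hB p) := by
  have row_add : (B + B') i = B i + B' i := rfl
  simp only [twistedOperator_apply, map_add, heatTransform_directionalDerivation,
    heatTransform_X_mul, row_add, directionalDerivation_add, Derivation.add_apply]
  ring

lemma heatTransform_comp_of_add_eq_zero {B B' : Matrix σ σ R} (hB : B.IsSymm) (hB' : B'.IsSymm)
    (h : B + B' = 0) : heatTransform hB ∘ₗ heatTransform hB' = LinearMap.id := by
  apply eq_id_of_map_X_mul
  · simp [heatTransform_one]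
  · simp [heatTransform_X_mul, heatTransform_twistedOperator, h, twistedOperator_zero]

/-- The heat transform as an automorphism; reversing time, that is, passing from `B` to `-B`,
inverts it. -/
def heatEquiv {B : Matrix σ σ R} (hB : B.IsSymm) : MvPolynomial σ R ≃ₗ[R] MvPolynomial σ R :=
  .ofLinearMap (heatTransform hB) (heatTransform hB.neg)
    (heatTransform_comp_of_add_eq_zero _ _ (add_neg_cancel B))
    (heatTransform_comp_of_add_eq_zero _ _ (neg_add_cancel B))

lemma heatEquiv_X_mul {B : Matrix σ σ R} (hB : B.IsSymm) (i : σ) (p : MvPolynomial σ R) :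
    heatEquiv hB (X i * p) = twistedOperator B i (heatEquiv hB p) :=
  heatTransform_X_mul hB i p

lemma map_heatEquiv_span_X_image {B : Matrix σ σ R} (hB : B.IsSymm) (S : Set σ) :
    ((Ideal.span (X '' S)).restrictScalars R).map (heatEquiv hB).toLinearMap =
      ⨆ i ∈ S, (twistedOperator B i).range := by
  have conj (i : σ) : (heatEquiv hB).toLinearMap ∘ₗ LinearMap.mulLeft R (X i) =
      twistedOperator B i ∘ₗ (heatEquiv hB).toLinearMap :=
    LinearMap.ext (heatEquiv_X_mul hB i)
  simp_rw [restrictScalars_span_image_eq_iSup_range_mulLeft, Submodule.map_iSup,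
    ← LinearMap.range_comp, conj, LinearMap.range_comp_of_range_eq_top _ (heatEquiv hB).range]

theorem twisted_operators_regular_sequence_general {B : Matrix σ σ R} (hB : B.IsSymm) :
    (∀ i j, Commute (twistedOperator B i) (twistedOperator B j)) ∧
    (∀ (S : Set σ) (k : σ), k ∉ S → ∀ g : MvPolynomial σ R,
      twistedOperator B k g ∈ ⨆ i ∈ S, (twistedOperator B i).range →
        g ∈ ⨆ i ∈ S, (twistedOperator B i).range) := by
  refine ⟨commute_twistedOperator hB, fun S k hk g hg => ?_⟩
  obtain ⟨p, rfl⟩ := (heatEquiv hB).surjective g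
  rw [← map_heatEquiv_span_X_image hB] at hg ⊢
  rw [← heatEquiv_X_mul] at hg
  have hXp : X k * p ∈ Ideal.span (X '' S) := by simpa using hg
  exact Submodule.mem_map_of_mem (mem_ideal_span_X_image_of_X_mul_mem hk hXp)

end TwistedOperators

section FinitelyManyVariables

variable {R : Type*} [CommRing R] {n : ℕ}

lemma twistedOperator_eq_Dop (B : Matrix (Fin n) (Fin n) R) (i : Fin n)
    (g : MvPolynomial (Fin n) R) : twistedOperator B i g = Dop B i g := by
  rw [twistedOperator_apply, directionalDerivation_eq_sum_pderiv, Dop]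

lemma iSup_range_twistedOperator_eq_DopSpan (B : Matrix (Fin n) (Fin n) R) (s : ℕ) :
    ⨆ i ∈ {i : Fin n | (i : ℕ) < s}, (twistedOperator B i).range = DopSpan B s := by
  refine le_antisymm (iSup₂_le ?_) (Submodule.span_le.2 ?_)
  · rintro i hi _ ⟨g, rfl⟩
    exact Submodule.subset_span ⟨i, g, hi, twistedOperator_eq_Dop B i g⟩
  · rintro _ ⟨i, g, hi, rfl⟩
    exact Submodule.mem_iSup_of_mem i <| Submodule.mem_iSup_of_mem hi
      ⟨g, twistedOperator_eq_Dop B i g⟩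

end FinitelyManyVariables

/-- Let `A` be an invertible symmetric `n×n` matrix over a
commutative ring `R` with inverse `B = (a^{ij})` and
`D_i(g) = Σ_j a^{ij} ∂g/∂x_j + x_i·g`.  Then `D_1,…,D_n` form a regular
sequence of commuting operators on `R[x_1,…,x_n]`: they pairwise commute, and
for every `0 ≤ s < n` the operator induced by `D_{s+1}` on the quotient
`R[x_1,…,x_n]/(D_1(R[x]) + ⋯ + D_s(R[x]))` is injective, i.e. if
`D_{s+1}(g) ∈ D_1(R[x]) + ⋯ + D_s(R[x])` then `g ∈ D_1(R[x]) + ⋯ + D_s(R[x])`. -/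
theorem twisted_operators_regular_sequence {R : Type*} [CommRing R] {n : ℕ}
    (hn : 0 < n) (A B : Matrix (Fin n) (Fin n) R) (hsymm : A.IsSymm)
    (hAB : A * B = 1) (hBA : B * A = 1) :
    (∀ (i j : Fin n) (g : MvPolynomial (Fin n) R),
      Dop B i (Dop B j g) = Dop B j (Dop B i g)) ∧
    (∀ (s : ℕ) (hs : s < n) (g : MvPolynomial (Fin n) R),
      Dop B ⟨s, hs⟩ g ∈ DopSpan B s → g ∈ DopSpan B s) := by
  obtain ⟨comm, regular⟩ :=
    twisted_operators_regular_sequence_general (Matrix.inv_eq_right_inv hAB ▸ hsymm.inv)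
  simp_rw [← twistedOperator_eq_Dop, ← iSup_range_twistedOperator_eq_DopSpan]
  exact ⟨fun i j => LinearMap.congr_fun (comm i j), fun s hs => regular _ _ (lt_irrefl s)⟩

end
end

section
/- Let R be a commutative ring, n, N positive integers, A an invertible symmetric n×n matrix over R, and V ∈ R[x_1,…,x_n] an arbitrary polynomial. Set R_N = R[λ]/(λ^N), and consider on R_N^n the twisted de Rham complex with differential d_f ω = dω + (Σ_{a,b} A_{ab} x_b dx_a + λ dV)∧ω, corresponding to the perturbed function f = ½xᵗAx + λV. Then the cohomology H^k_f(R_N) vanishes for k ≠ n, and H^n_f(R_N) is isomorphic to R_N ≅ R[λ]/(λ^N), generated by the class of dx_1∧⋯∧dx_n. -/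
open MvPolynomial

noncomputable section

/-- Polynomial differential forms on `K^n`: a form assigns to each subset
`s ⊆ {1,…,n}` (the indices of `dx_{i_1} ∧ ⋯ ∧ dx_{i_k}` with `i_1 < ⋯ < i_k`)
a polynomial coefficient. -/
abbrev Form (n : ℕ) (K : Type*) [CommRing K] :=
  Finset (Fin n) → MvPolynomial (Fin n) K

/-- The sign `(-1)^{#{j ∈ s | j < i}}`. -/
def sgn {n : ℕ} (K : Type*) [CommRing K] (s : Finset (Fin n)) (i : Fin n) :
    MvPolynomial (Fin n) K :=
  (-1) ^ (s.filter (fun j => j < i)).card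

/-- The twisted de Rham differential `d_α ω = dω + α ∧ ω` associated to a
(closed) polynomial 1-form `α = Σ_i α_i dx_i`. -/
def dTwist {n : ℕ} {K : Type*} [CommRing K]
    (α : Fin n → MvPolynomial (Fin n) K) :
    Form n K →ₗ[K] Form n K where
  toFun ω := fun s => ∑ i ∈ s,
    sgn K s i * (pderiv i (ω (s.erase i)) + α i * ω (s.erase i))
  map_add' ω₁ ω₂ := by
    funext s
    simp only [Pi.add_apply]
    rw [← Finset.sum_add_distrib]
    refine Finset.sum_congr rfl fun i _ => ?_
    simp only [map_add]
    ring
  map_smul' c ω := by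
    funext s
    simp only [Pi.smul_apply, map_smul, RingHom.id_apply, Finset.smul_sum]
    refine Finset.sum_congr rfl fun i _ => ?_
    simp [mul_add, mul_smul_comm, smul_add, mul_assoc]

/-- The (untwisted) polynomial de Rham differential. -/
abbrev dRham (n : ℕ) (K : Type*) [CommRing K] : Form n K →ₗ[K] Form n K :=
  dTwist (fun _ => 0)

/-- Multiplication of a form by a 1-form `α`, `ω ↦ α ∧ ω`. -/
def wedge1 {n : ℕ} {K : Type*} [CommRing K]
    (α : Fin n → MvPolynomial (Fin n) K) :
    Form n K →ₗ[K] Form n K where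
  toFun ω := fun s => ∑ i ∈ s, sgn K s i * (α i * ω (s.erase i))
  map_add' ω₁ ω₂ := by
    funext s
    simp only [Pi.add_apply]
    rw [← Finset.sum_add_distrib]
    refine Finset.sum_congr rfl fun i _ => ?_
    ring
  map_smul' c ω := by
    funext s
    simp only [Pi.smul_apply, RingHom.id_apply, Finset.smul_sum]
    refine Finset.sum_congr rfl fun i _ => ?_
    simp [mul_smul_comm]

/-- Forms of pure degree `k`: those supported on index sets of cardinality `k`. -/
def formDeg (n : ℕ) (K : Type*) [CommRing K] (k : ℕ) : Submodule K (Form n K) where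
  carrier := {ω | ∀ s : Finset (Fin n), s.card ≠ k → ω s = 0}
  add_mem' := by
    intro a b ha hb s hs
    simp [Pi.add_apply, ha s hs, hb s hs]
  zero_mem' := fun s _ => rfl
  smul_mem' := by
    intro c a ha s hs
    simp [Pi.smul_apply, ha s hs]

/-- Degree-`k` cocycles of the twisted de Rham complex. -/
def cocycles {n : ℕ} {K : Type*} [CommRing K]
    (α : Fin n → MvPolynomial (Fin n) K) (k : ℕ) : Submodule K (Form n K) :=
  formDeg n K k ⊓ LinearMap.ker (dTwist α)

/-- Degree-`k` coboundaries of the twisted de Rham complex. -/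
def cobounds {n : ℕ} {K : Type*} [CommRing K]
    (α : Fin n → MvPolynomial (Fin n) K) (k : ℕ) : Submodule K (Form n K) :=
  Submodule.map (dTwist α) (formDeg n K (k - 1))

/-- The degree-`k` twisted de Rham cohomology of the 1-form `α`. -/
abbrev Htwist {n : ℕ} {K : Type*} [CommRing K]
    (α : Fin n → MvPolynomial (Fin n) K) (k : ℕ) :=
  (cocycles α k) ⧸ (Submodule.comap (cocycles α k).subtype (cobounds α k))

/-- The differential `df` of a polynomial, as the family of coefficients of the
1-form `Σ_i (∂f/∂x_i) dx_i`. -/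
def grad {n : ℕ} {K : Type*} [CommRing K] (f : MvPolynomial (Fin n) K) :
    Fin n → MvPolynomial (Fin n) K :=
  fun i => pderiv i f

/-- The twisted de Rham cohomology `H^k_f(K)` of a polynomial `f`. -/
abbrev Hf {n : ℕ} {K : Type*} [CommRing K] (f : MvPolynomial (Fin n) K) (k : ℕ) :=
  Htwist (grad f) k

/-- The top form `dx_1 ∧ ⋯ ∧ dx_n`. -/
def topForm (n : ℕ) (K : Type*) [CommRing K] : Form n K :=
  fun s => if s = Finset.univ then 1 else 0


/-- The ring `R_N = R[λ]/(λ^N)`. -/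
abbrev RN (R : Type*) [CommRing R] (N : ℕ) : Type _ :=
  Polynomial R ⧸ Ideal.span {(Polynomial.X : Polynomial R) ^ N}

/-- The canonical map `R → R_N`. -/
def toRN (R : Type*) [CommRing R] (N : ℕ) : R →+* RN R N :=
  (Ideal.Quotient.mk _).comp Polynomial.C

/-- The class of `λ` in `R_N = R[λ]/(λ^N)`. -/
def lamRN (R : Type*) [CommRing R] (N : ℕ) : RN R N :=
  Ideal.Quotient.mk _ Polynomial.X

/-- The 1-form `df = Σ_{a,b} A_{ab} x_b dx_a + λ dV` associated to the
perturbed quadratic function `f = ½xᵗAx + λV`, given by its coefficient family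
(defined even when `2` is not invertible). -/
def perturbedDf {n : ℕ} {R : Type*} [CommRing R] (N : ℕ)
    (A : Matrix (Fin n) (Fin n) R) (V : MvPolynomial (Fin n) R) :
    Fin n → MvPolynomial (Fin n) (RN R N) :=
  fun a => (∑ b, C (toRN R N (A a b)) * X b) +
    C (lamRN R N) * pderiv a (MvPolynomial.map (toRN R N) V)

/-!
If `α` is closed, the operators `∂_i + α_i` commute, so `φ p = p(∂ + α) · 1` defines a linear map
with `φ 1 = 1` that turns multiplication by `x_i` into `∂_i + α_i`. For `α = Ax + β` with `A`
invertible and `β` nilpotent, the substitution `x ↦ A⁻¹x` turns `φ` into a map `ψ` with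
`ψ (x_i p) = x_i ψ p + T_i (ψ p)`, where no `T_i` raises the degree modulo a nilpotent ideal. Hence
`1 - ψ` lowers the degree modulo this ideal, so it is locally nilpotent and `φ` is bijective. Thus
the twisted de Rham complex is isomorphic to the Koszul complex of `x_1, …, x_n`, which is
contracted one variable at a time onto the constant multiples of `dx_1 ∧ ⋯ ∧ dx_n`.
-/

section LinearAlgebra

variable {R M : Type*}

theorem bijective_one_sub_of_forall_exists_pow_apply_eq_zero [Ring R] [AddCommGroup M]
    [Module R M] {E : Module.End R M} (hE : ∀ m, ∃ d : ℕ, (E ^ d) m = 0) :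
    Function.Bijective ⇑(1 - E : Module.End R M) := by
  constructor
  · rw [injective_iff_map_eq_zero]
    intro m hm
    obtain ⟨d, hd⟩ := hE m
    have hgeom := LinearMap.congr_fun (geom_sum_mul_neg E d) m
    simpa only [Module.End.mul_apply, hm, map_zero, LinearMap.sub_apply, Module.End.one_apply, hd,
      sub_zero] using hgeom.symm
  · intro m
    obtain ⟨d, hd⟩ := hE m
    refine ⟨(∑ i ∈ Finset.range d, E ^ i) m, ?_⟩
    rw [← Module.End.mul_apply, mul_neg_geom_sum, LinearMap.sub_apply, hd, sub_zero,
      Module.End.one_apply]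

theorem exists_pow_apply_mem_pow_smul_top [CommRing R] [AddCommGroup M] [Module R M]
    {I : Ideal R} {E : Module.End R M} (hE : ∀ m, ∃ d : ℕ, (E ^ d) m ∈ (I • ⊤ : Submodule R M))
    (k : ℕ) (m : M) : ∃ d : ℕ, (E ^ d) m ∈ (I ^ k • ⊤ : Submodule R M) := by
  induction k with
  | zero => exact ⟨0, by simp⟩
  | succ k ih =>
    suffices hstep : ∀ y ∈ (I ^ k • ⊤ : Submodule R M), ∃ e : ℕ, (E ^ e) y ∈
        (I ^ (k + 1) • ⊤ : Submodule R M) by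
      obtain ⟨d, hd⟩ := ih
      obtain ⟨e, he⟩ := hstep _ hd
      exact ⟨e + d, by rwa [pow_add E e d, Module.End.mul_apply]⟩
    intro y hy
    have hstable (e : ℕ) {z : M} (hz : z ∈ (I ^ (k + 1) • ⊤ : Submodule R M)) :
        (E ^ e) z ∈ (I ^ (k + 1) • ⊤ : Submodule R M) :=
      Submodule.smul_top_le_comap_smul_top _ (E ^ e) hz
    induction hy using Submodule.smul_induction_on' with
    | smul r hr z _ =>
      obtain ⟨e, he⟩ := hE z
      refine ⟨e, ?_⟩
      rw [map_smul, pow_succ, Submodule.mul_smul]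
      exact Submodule.smul_mem_smul hr he
    | add y₁ _ y₂ _ ih₁ ih₂ =>
      obtain ⟨e₁, he₁⟩ := ih₁
      obtain ⟨e₂, he₂⟩ := ih₂
      refine ⟨e₁ + e₂, ?_⟩
      rw [map_add]
      refine add_mem ?_ ?_
      · rw [add_comm e₁ e₂, pow_add E e₂ e₁]
        exact hstable e₂ he₁
      · rw [pow_add E e₁ e₂]
        exact hstable e₁ he₂

theorem bijective_one_sub_of_forall_exists_pow_apply_mem [CommRing R] [AddCommGroup M]
    [Module R M] {I : Ideal R} (hI : IsNilpotent I) {E : Module.End R M}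
    (hE : ∀ m, ∃ d : ℕ, (E ^ d) m ∈ (I • ⊤ : Submodule R M)) :
    Function.Bijective ⇑(1 - E : Module.End R M) := by
  obtain ⟨k, hk⟩ := hI
  refine bijective_one_sub_of_forall_exists_pow_apply_eq_zero fun m => ?_
  simpa [hk] using exists_pow_apply_mem_pow_smul_top hE k m

theorem exists_quotient_linearEquiv_of_functional [Ring R] [AddCommGroup M] [Module R M]
    {N : Submodule R M} {ℓ : M →ₗ[R] R} {t : M} (ht : ℓ t = 1) (hN : ∀ m ∈ N, ℓ m = 0)
    (hℓ : ∀ m, m - ℓ m • t ∈ N) : ∃ e : (M ⧸ N) ≃ₗ[R] R, e (Submodule.Quotient.mk t) = 1 := by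
  have hker : N = LinearMap.ker ℓ := by
    refine le_antisymm (fun m hm => hN m hm) fun m hm => ?_
    simpa [LinearMap.mem_ker.1 hm] using hℓ m
  subst hker
  have hsurj : Function.Surjective ℓ := fun r => ⟨r • t, by simp [ht]⟩
  exact ⟨ℓ.quotKerEquivOfSurjective hsurj, ht⟩

theorem exists_algHom_apply_X_of_commute {σ A : Type*} [CommRing R] [Ring A] [Algebra R A]
    {D : σ → A} (hD : ∀ i j, Commute (D i) (D j)) :
    ∃ F : MvPolynomial σ R →ₐ[R] A, ∀ i, F (X i) = D i := by
  have : IsMulCommutative (Algebra.adjoin R (Set.range D)) :=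
    Algebra.isMulCommutative_adjoin R (by rintro _ ⟨i, rfl⟩ _ ⟨j, rfl⟩; exact hD i j)
  open scoped IsMulCommutative in
  exact ⟨(Algebra.adjoin R (Set.range D)).val.comp
    (aeval fun i => ⟨D i, Algebra.subset_adjoin ⟨i, rfl⟩⟩), fun i => by simp⟩

end LinearAlgebra

section Koszul

variable {σ K M : Type*} [CommRing K] [AddCommGroup M] [Module K M]

/-- Commuting operators `D i` with commuting left inverses `Q i`, where `Q i` also commutes with
`D j` for `j ≠ i`. The model is multiplication by, and division with remainder by, the variables
of a polynomial ring. -/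
structure CommutingRetractions (D Q : σ → Module.End K M) : Prop where
  commute_D : ∀ i j, Commute (D i) (D j)
  commute_Q : ∀ i j, Commute (Q i) (Q j)
  commute_Q_D : ∀ ⦃i j⦄, i ≠ j → Commute (Q i) (D j)
  Q_mul_D : ∀ i, Q i * D i = 1

namespace CommutingRetractions

variable {M' : Type*} [AddCommGroup M'] [Module K M'] {D Q : σ → Module.End K M}

theorem conj (h : CommutingRetractions D Q) (φ : M ≃ₗ[K] M') :
    CommutingRetractions (fun i => φ.conjRingEquiv (D i)) (fun i => φ.conjRingEquiv (Q i)) where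
  commute_D i j := (h.commute_D i j).map φ.conjRingEquiv
  commute_Q i j := (h.commute_Q i j).map φ.conjRingEquiv
  commute_Q_D i j hij := (h.commute_Q_D hij).map φ.conjRingEquiv
  Q_mul_D i := by rw [← map_mul, h.Q_mul_D, map_one]

theorem Q_D_apply (h : CommutingRetractions D Q) (j : σ) (m : M) : Q j (D j m) = m :=
  LinearMap.congr_fun (h.Q_mul_D j) m

theorem Q_D_apply_of_ne (h : CommutingRetractions D Q) {i j : σ} (hij : i ≠ j) (m : M) :
    Q i (D j m) = D j (Q i m) :=
  LinearMap.congr_fun (h.commute_Q_D hij) m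

end CommutingRetractions

/-- The Koszul cochains of degree `k`. -/
def koszulCochains (σ K M : Type*) [CommRing K] [AddCommGroup M] [Module K M] (k : ℕ) :
    Submodule K (Finset σ → M) :=
  Submodule.pi {s | s.card ≠ k} fun _ => ⊥

theorem mem_koszulCochains {k : ℕ} {ω : Finset σ → M} :
    ω ∈ koszulCochains σ K M k ↔ ∀ s : Finset σ, s.card ≠ k → ω s = 0 :=
  Iff.rfl

variable [LinearOrder σ]

/-- The sign of `dx_i ∧ dx_{s \ {i}}` relative to `dx_s`; a unit of `ℤ`, so that it acts on every
module and is its own inverse. -/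
def koszulSign (s : Finset σ) (i : σ) : ℤˣ :=
  (-1) ^ (s.filter (· < i)).card

theorem koszulSign_insert {s : Finset σ} {j : σ} (hj : j ∉ s) (i : σ) :
    koszulSign (insert j s) i = (if j < i then -1 else 1) * koszulSign s i := by
  by_cases hji : j < i
  · rw [koszulSign, koszulSign, Finset.filter_insert, if_pos hji, if_pos hji,
      Finset.card_insert_of_notMem (by simp [hj]), pow_succ']
  · rw [koszulSign, koszulSign, Finset.filter_insert, if_neg hji, if_neg hji, one_mul]

theorem koszulSign_insert_self {s : Finset σ} {i : σ} (hi : i ∉ s) :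
    koszulSign (insert i s) i = koszulSign s i := by
  simp [koszulSign_insert hi]

theorem koszulSign_mul_koszulSign_insert {s : Finset σ} {i j : σ} (hi : i ∈ s) (hj : j ∉ s) :
    koszulSign s j * koszulSign (insert j s) i =
      -(koszulSign s i * koszulSign (s.erase i) j) := by
  have hj_sign : koszulSign s j = (if i < j then -1 else 1) * koszulSign (s.erase i) j := by
    conv_lhs => rw [← Finset.insert_erase hi, koszulSign_insert (Finset.notMem_erase i s)]
  rw [koszulSign_insert hj, hj_sign]
  rcases lt_or_gt_of_ne (ne_of_mem_of_not_mem hi hj) with h | h <;>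
    simp [h, h.not_gt, mul_comm]

/-- The differential of the Koszul (cochain) complex of a family of operators `D i` on `M`. A
cochain assigns to each finite set `s` the coefficient in `M` of `dx_s`. -/
def koszulD (D : σ → Module.End K M) : (Finset σ → M) →ₗ[K] (Finset σ → M) :=
  LinearMap.pi fun s => ∑ i ∈ s, koszulSign s i • D i ∘ₗ LinearMap.proj (s.erase i)

theorem koszulD_apply (D : σ → Module.End K M) (ω : Finset σ → M) (s : Finset σ) :
    koszulD D ω s = ∑ i ∈ s, koszulSign s i • D i (ω (s.erase i)) := by
  simp [koszulD]

/-- Contraction with the `j`-th direction followed by `Q j`: a homotopy from the identity of the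
Koszul complex of `D` to `koszulProj D Q j`, for `Q` as in `CommutingRetractions D Q`. -/
def koszulHomotopy (Q : σ → Module.End K M) (j : σ) : (Finset σ → M) →ₗ[K] (Finset σ → M) :=
  LinearMap.pi fun s =>
    if j ∈ s then 0 else koszulSign s j • Q j ∘ₗ LinearMap.proj (insert j s)

theorem koszulHomotopy_apply_of_mem (Q : σ → Module.End K M) {j : σ} {s : Finset σ} (hj : j ∈ s)
    (ω : Finset σ → M) : koszulHomotopy Q j ω s = 0 := by
  simp [koszulHomotopy, hj]

theorem koszulHomotopy_apply_of_notMem (Q : σ → Module.End K M) {j : σ} {s : Finset σ}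
    (hj : j ∉ s) (ω : Finset σ → M) :
    koszulHomotopy Q j ω s = koszulSign s j • Q j (ω (insert j s)) := by
  simp [koszulHomotopy, hj]

/-- The part of a cochain divisible by `dx_j`, with `1 - D j * Q j` applied to its coefficients. -/
def koszulProj (D Q : σ → Module.End K M) (j : σ) : (Finset σ → M) →ₗ[K] (Finset σ → M) :=
  LinearMap.pi fun s => if j ∈ s then (1 - D j * Q j) ∘ₗ LinearMap.proj s else 0

theorem koszulProj_apply (D Q : σ → Module.End K M) (j : σ) (ω : Finset σ → M) (s : Finset σ) :
    koszulProj D Q j ω s = if j ∈ s then ω s - D j (Q j (ω s)) else 0 := by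
  by_cases hj : j ∈ s <;> simp [koszulProj, hj]

theorem koszulHomotopy_mem_koszulCochains (Q : σ → Module.End K M) (j : σ) {k : ℕ}
    {ω : Finset σ → M} (hω : ω ∈ koszulCochains σ K M k) :
    koszulHomotopy Q j ω ∈ koszulCochains σ K M (k - 1) := by
  refine mem_koszulCochains.2 fun s hs => ?_
  by_cases hj : j ∈ s
  · exact koszulHomotopy_apply_of_mem Q hj ω
  · have hcard : (insert j s).card ≠ k := by
      rw [Finset.card_insert_of_notMem hj]
      omega
    rw [koszulHomotopy_apply_of_notMem Q hj, mem_koszulCochains.1 hω _ hcard, map_zero, smul_zero]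

theorem koszulProj_mem_koszulCochains (D Q : σ → Module.End K M) (j : σ) {k : ℕ}
    {ω : Finset σ → M} (hω : ω ∈ koszulCochains σ K M k) :
    koszulProj D Q j ω ∈ koszulCochains σ K M k := by
  refine mem_koszulCochains.2 fun s hs => ?_
  simp [koszulProj_apply, mem_koszulCochains.1 hω s hs]

namespace CommutingRetractions

variable {D Q : σ → Module.End K M}

theorem koszulD_koszulHomotopy_add (h : CommutingRetractions D Q) (j : σ) (ω : Finset σ → M) :
    koszulD D (koszulHomotopy Q j ω) + koszulHomotopy Q j (koszulD D ω) =
      ω - koszulProj D Q j ω := by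
  funext s
  rw [Pi.add_apply, Pi.sub_apply, koszulProj_apply]
  by_cases hj : j ∈ s
  · have hsign : koszulSign (s.erase j) j = koszulSign s j := by
      conv_rhs => rw [← Finset.insert_erase hj, koszulSign_insert_self (Finset.notMem_erase j s)]
    rw [koszulHomotopy_apply_of_mem Q hj, if_pos hj, add_zero, sub_sub_cancel, koszulD_apply,
      Finset.sum_eq_single_of_mem j hj]
    · rw [koszulHomotopy_apply_of_notMem Q (Finset.notMem_erase j s), Finset.insert_erase hj,
        hsign, LinearMap.map_smul_of_tower, smul_smul, Int.units_mul_self, one_smul]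
    · intro i _ hij
      rw [koszulHomotopy_apply_of_mem Q (Finset.mem_erase.2 ⟨hij.symm, hj⟩), map_zero, smul_zero]
  · have hcancel : ∀ i ∈ s, koszulSign s i • D i (koszulHomotopy Q j ω (s.erase i)) =
        -(koszulSign s j • Q j (koszulSign (insert j s) i • D i (ω ((insert j s).erase i)))) := by
      intro i hi
      have hji : j ≠ i := (ne_of_mem_of_not_mem hi hj).symm
      rw [koszulHomotopy_apply_of_notMem Q fun hmem => hj (Finset.mem_of_mem_erase hmem),
        LinearMap.map_smul_of_tower, LinearMap.map_smul_of_tower, h.Q_D_apply_of_ne hji,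
        Finset.erase_insert_of_ne hji, smul_smul, smul_smul,
        koszulSign_mul_koszulSign_insert hi hj, Units.neg_smul, neg_neg]
    rw [if_neg hj, sub_zero, koszulHomotopy_apply_of_notMem Q hj, koszulD_apply, koszulD_apply,
      Finset.sum_insert hj, map_add, smul_add, map_sum, Finset.smul_sum,
      Finset.sum_congr rfl hcancel, Finset.sum_neg_distrib, neg_add_cancel_comm_assoc,
      LinearMap.map_smul_of_tower, h.Q_D_apply, koszulSign_insert_self hj,
      Finset.erase_insert hj, smul_smul, Int.units_mul_self, one_smul]

theorem koszulD_koszulProj (h : CommutingRetractions D Q) (j : σ) (ω : Finset σ → M) :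
    koszulD D (koszulProj D Q j ω) = koszulProj D Q j (koszulD D ω) := by
  funext s
  rw [koszulProj_apply, koszulD_apply, koszulD_apply]
  split_ifs with hj
  · rw [map_sum, map_sum, ← Finset.sum_sub_distrib]
    refine Finset.sum_congr rfl fun i _ => ?_
    rw [koszulProj_apply, LinearMap.map_smul_of_tower, LinearMap.map_smul_of_tower, ← smul_sub]
    congr 1
    rcases eq_or_ne j i with rfl | hji
    · simp [h.Q_D_apply]
    · have hDD : D j (D i (Q j (ω (s.erase i)))) = D i (D j (Q j (ω (s.erase i)))) :=
        LinearMap.congr_fun (h.commute_D j i) _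
      rw [if_pos (Finset.mem_erase.2 ⟨hji, hj⟩), h.Q_D_apply_of_ne hji, hDD, map_sub]
  · refine Finset.sum_eq_zero fun i _ => ?_
    rw [koszulProj_apply, if_neg fun hmem => hj (Finset.mem_of_mem_erase hmem), map_zero, smul_zero]

theorem koszulProj_koszulProj (h : CommutingRetractions D Q) (j : σ) (ω : Finset σ → M) :
    koszulProj D Q j (koszulProj D Q j ω) = koszulProj D Q j ω := by
  funext s
  simp only [koszulProj_apply]
  split_ifs <;> simp [h.Q_D_apply]

theorem koszulProj_comm (h : CommutingRetractions D Q) (i j : σ) (ω : Finset σ → M) :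
    koszulProj D Q i (koszulProj D Q j ω) = koszulProj D Q j (koszulProj D Q i ω) := by
  rcases eq_or_ne i j with rfl | hij
  · rfl
  have hDQ : Commute (D i * Q i) (D j * Q j) :=
    ((h.commute_D i j).mul_right (h.commute_Q_D hij.symm).symm).mul_left
      ((h.commute_Q_D hij).mul_right (h.commute_Q i j))
  have hcomm : Commute (1 - D i * Q i) (1 - D j * Q j) :=
    (Commute.one_left _).sub_left ((Commute.one_right _).sub_right hDQ)
  funext s
  have hcomm_apply := LinearMap.congr_fun hcomm (ω s)
  simp only [Module.End.mul_apply, LinearMap.sub_apply, Module.End.one_apply] at hcomm_apply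
  simp only [koszulProj_apply]
  split_ifs
  exacts [hcomm_apply, by simp, by simp, rfl]

theorem exists_koszulD_add_of_koszulD_eq_zero (h : CommutingRetractions D Q) {k : ℕ}
    {ω : Finset σ → M} (hω : ω ∈ koszulCochains σ K M k) (hd : koszulD D ω = 0) (J : Finset σ) :
    ∃ η ∈ koszulCochains σ K M (k - 1), ∃ ρ ∈ koszulCochains σ K M k,
      ω = koszulD D η + ρ ∧ koszulD D ρ = 0 ∧ ∀ j ∈ J, koszulProj D Q j ρ = ρ := by
  induction J using Finset.induction_on with
  | empty => exact ⟨0, zero_mem _, ω, hω, by simp, hd, by simp⟩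
  | insert i J _ ih =>
    obtain ⟨η, hη, ρ, hρ, hωρ, hdρ, hfix⟩ := ih
    have hhom : koszulD D (koszulHomotopy Q i ρ) = ρ - koszulProj D Q i ρ := by
      simpa [hdρ] using h.koszulD_koszulHomotopy_add i ρ
    refine ⟨η + koszulHomotopy Q i ρ, add_mem hη (koszulHomotopy_mem_koszulCochains Q i hρ),
      koszulProj D Q i ρ, koszulProj_mem_koszulCochains D Q i hρ, ?_, ?_, ?_⟩
    · rw [map_add, hhom, add_assoc, sub_add_cancel, hωρ]
    · rw [h.koszulD_koszulProj, hdρ, map_zero]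
    · intro j hj
      rcases Finset.mem_insert.1 hj with rfl | hj
      · exact h.koszulProj_koszulProj j ρ
      · rw [h.koszulProj_comm, hfix j hj]

theorem exists_koszulD_add_single_of_koszulD_eq_zero [Fintype σ] (h : CommutingRetractions D Q)
    {k : ℕ} {ω : Finset σ → M} (hω : ω ∈ koszulCochains σ K M k) (hd : koszulD D ω = 0) :
    ∃ η ∈ koszulCochains σ K M (k - 1), ∃ m : M,
      ω = koszulD D η + Pi.single Finset.univ m ∧ ∀ j, Q j m = 0 := by
  obtain ⟨η, hη, ρ, -, hωρ, -, hfix⟩ :=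
    h.exists_koszulD_add_of_koszulD_eq_zero hω hd Finset.univ
  have hfix_apply (j : σ) (s : Finset σ) : koszulProj D Q j ρ s = ρ s := by
    rw [hfix j (Finset.mem_univ j)]
  have hsingle : Pi.single Finset.univ (ρ Finset.univ) = ρ := by
    funext s
    rcases eq_or_ne s Finset.univ with rfl | hs
    · rw [Pi.single_eq_same]
    · obtain ⟨j, hj⟩ : ∃ j, j ∉ s := by simpa [Finset.eq_univ_iff_forall] using hs
      rw [Pi.single_eq_of_ne hs, ← hfix_apply j s, koszulProj_apply, if_neg hj]
  refine ⟨η, hη, ρ Finset.univ, by rw [hsingle, hωρ], fun j => ?_⟩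
  have hDQ : D j (Q j (ρ Finset.univ)) = 0 := by
    simpa [koszulProj_apply] using hfix_apply j Finset.univ
  rw [← h.Q_D_apply j (Q j _), hDQ, map_zero]

end CommutingRetractions

end Koszul

section Polynomial

variable {σ K : Type*} [CommRing K]

/-- The quotient of division with remainder by the variable `x_j`. -/
def divX (j : σ) : Module.End K (MvPolynomial σ K) where
  toFun p := p.divMonomial (Finsupp.single j 1)
  map_add' p q := add_divMonomial p q _
  map_smul' c p := by
    ext m
    simp [coeff_divMonomial]

theorem coeff_divX (j : σ) (p : MvPolynomial σ K) (m : σ →₀ ℕ) :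
    coeff m (divX j p) = coeff (Finsupp.single j 1 + m) p :=
  coeff_divMonomial _ p m

theorem divX_X_mul_of_ne {i j : σ} (hij : i ≠ j) (p : MvPolynomial σ K) :
    divX i (X j * p) = X j * divX i p := by
  classical
  ext m
  have hmem : j ∈ (Finsupp.single i 1 + m).support ↔ j ∈ m.support := by
    simp [hij]
  rw [coeff_divX, coeff_X_mul', coeff_X_mul']
  by_cases hj : j ∈ m.support
  · have hle : Finsupp.single j 1 ≤ m := by
      simpa [Nat.one_le_iff_ne_zero] using hj
    rw [if_pos (hmem.2 hj), if_pos hj, coeff_divX, add_tsub_assoc_of_le hle]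
  · rw [if_neg fun h => hj (hmem.1 h), if_neg hj]

theorem commutingRetractions_mulLeft_X_divX :
    CommutingRetractions (fun i : σ => LinearMap.mulLeft K (X i : MvPolynomial σ K)) divX where
  commute_D i j := LinearMap.ext fun p => mul_left_comm (X i) (X j) p
  commute_Q i j := by
    refine LinearMap.ext fun p => ?_
    ext m
    simp only [Module.End.mul_apply, coeff_divX, add_left_comm]
  commute_Q_D _ _ hij := LinearMap.ext fun p => divX_X_mul_of_ne hij p
  Q_mul_D i := LinearMap.ext fun p => X_mul_divMonomial i p

theorem eq_C_constantCoeff_of_forall_divX_eq_zero {p : MvPolynomial σ K}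
    (hp : ∀ j, divX j p = 0) : p = C (constantCoeff p) := by
  classical
  ext m
  rcases eq_or_ne m 0 with rfl | hm
  · simp [constantCoeff_eq]
  · obtain ⟨j, hj⟩ := Finsupp.ne_iff.1 hm
    have hle : Finsupp.single j 1 ≤ m := by
      simpa [Nat.one_le_iff_ne_zero] using hj
    rw [coeff_C, if_neg hm.symm, ← add_tsub_cancel_of_le hle, ← coeff_divX, hp, coeff_zero]

/-- The operator `∂_i + α_i` on polynomials. -/
def twistedDeriv (α : σ → MvPolynomial σ K) (i : σ) : Module.End K (MvPolynomial σ K) :=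
  (pderiv i).toLinearMap + LinearMap.mulLeft K (α i)

theorem twistedDeriv_apply (α : σ → MvPolynomial σ K) (i : σ) (p : MvPolynomial σ K) :
    twistedDeriv α i p = pderiv i p + α i * p :=
  rfl

theorem pderiv_comm (i j : σ) (p : MvPolynomial σ K) :
    pderiv i (pderiv j p) = pderiv j (pderiv i p) := by
  classical
  have hbracket : ⁅(pderiv i : Derivation K (MvPolynomial σ K) (MvPolynomial σ K)), pderiv j⁆ = 0 :=
    derivation_ext fun k => by
      rw [Derivation.commutator_apply, pderiv_X, pderiv_X, Pi.single_apply, Pi.single_apply]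
      simp [apply_ite]
  rw [← sub_eq_zero, ← Derivation.commutator_apply, hbracket, Derivation.zero_apply]

theorem commute_twistedDeriv {α : σ → MvPolynomial σ K}
    (hα : ∀ i j, pderiv i (α j) = pderiv j (α i)) (i j : σ) :
    Commute (twistedDeriv α i) (twistedDeriv α j) := by
  refine LinearMap.ext fun p => ?_
  simp only [Module.End.mul_apply, twistedDeriv_apply, map_add, pderiv_mul, hα i j,
    pderiv_comm i j p]
  ring

theorem exists_linearMap_map_X_mul_eq_twistedDeriv {α : σ → MvPolynomial σ K}
    (hα : ∀ i j, pderiv i (α j) = pderiv j (α i)) :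
    ∃ φ : Module.End K (MvPolynomial σ K),
      φ 1 = 1 ∧ ∀ i p, φ (X i * p) = twistedDeriv α i (φ p) := by
  obtain ⟨F, hF⟩ := exists_algHom_apply_X_of_commute (R := K) (commute_twistedDeriv hα)
  refine ⟨LinearMap.applyₗ (1 : MvPolynomial σ K) ∘ₗ F.toLinearMap, ?_, fun i p => ?_⟩
  · simp
  · simp [hF]

/-- The linear automorphisms of the polynomial ring that fix `1` and turn multiplication by `x_i`
into `∂_i + α_i`; they identify the twisted complex of `α` with the Koszul complex of the
variables. -/
structure IsTwistIntertwiner (α : σ → MvPolynomial σ K)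
    (φ : MvPolynomial σ K ≃ₗ[K] MvPolynomial σ K) : Prop where
  map_one : φ 1 = 1
  map_X_mul : ∀ i p, φ (X i * p) = twistedDeriv α i (φ p)

/-- The functional `p ↦ (φ⁻¹ p)(0)`. If `φ` intertwines `x_i` with `∂_i + α_i`, it vanishes on the
images of the operators `∂_i + α_i`, as integration against `exp f` does when `α = df`. -/
def formalIntegral (φ : MvPolynomial σ K ≃ₗ[K] MvPolynomial σ K) : MvPolynomial σ K →ₗ[K] K :=
  lcoeff K 0 ∘ₗ φ.symm.toLinearMap

namespace IsTwistIntertwiner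

variable {α : σ → MvPolynomial σ K} {φ : MvPolynomial σ K ≃ₗ[K] MvPolynomial σ K}

theorem commutingRetractions (hφ : IsTwistIntertwiner α φ) :
    CommutingRetractions (twistedDeriv α) fun i => φ.conjRingEquiv (divX i) := by
  have hconj : twistedDeriv α = fun i => φ.conjRingEquiv (LinearMap.mulLeft K (X i)) := by
    refine funext fun i => LinearMap.ext fun p => ?_
    simp [hφ.map_X_mul]
  rw [hconj]
  exact commutingRetractions_mulLeft_X_divX.conj φ

theorem eq_smul_one (hφ : IsTwistIntertwiner α φ) {p : MvPolynomial σ K}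
    (hp : ∀ i, φ.conjRingEquiv (divX i) p = 0) : p = formalIntegral φ p • 1 := by
  have hdivX (i : σ) : divX i (φ.symm p) = 0 := by simpa using hp i
  calc p = φ (C (constantCoeff (φ.symm p))) := by
        rw [← eq_C_constantCoeff_of_forall_divX_eq_zero hdivX, φ.apply_symm_apply]
    _ = formalIntegral φ p • 1 := by
        rw [← mul_one (C _), ← smul_eq_C_mul, map_smul, hφ.map_one]
        rfl

theorem formalIntegral_one (hφ : IsTwistIntertwiner α φ) : formalIntegral φ 1 = 1 := by
  have hsymm : φ.symm 1 = 1 := by rw [φ.symm_apply_eq, hφ.map_one]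
  simp [formalIntegral, hsymm]

theorem formalIntegral_twistedDeriv (hφ : IsTwistIntertwiner α φ) (i : σ)
    (p : MvPolynomial σ K) : formalIntegral φ (twistedDeriv α i p) = 0 := by
  obtain ⟨q, rfl⟩ := φ.surjective p
  rw [← hφ.map_X_mul]
  simp [formalIntegral, ← constantCoeff_eq]

end IsTwistIntertwiner

/-- The polynomials that have total degree `< d` modulo the ideal `I` of the coefficient ring. -/
def degreeLTMod (σ : Type*) {K : Type*} [CommRing K] (I : Ideal K) (d : ℕ) :
    Submodule K (MvPolynomial σ K) where
  carrier := {p | ∀ m : σ →₀ ℕ, d ≤ m.degree → coeff m p ∈ I}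
  add_mem' hp hq m hm := by
    rw [coeff_add]
    exact I.add_mem (hp m hm) (hq m hm)
  zero_mem' m _ := by simp
  smul_mem' c p hp m hm := by
    rw [coeff_smul]
    exact I.mul_mem_left c (hp m hm)

section DegreeLTMod

variable {I : Ideal K} {d : ℕ} {p : MvPolynomial σ K}

theorem degreeLTMod_mono : Monotone (degreeLTMod σ I) :=
  fun _ _ hde _ hp m hm => hp m (hde.trans hm)

theorem degreeLTMod_zero : degreeLTMod σ I 0 = I • ⊤ := by
  ext p
  rw [Ideal.smul_top_eq_map, Submodule.restrictScalars_mem, algebraMap_eq, mem_map_C_iff]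
  exact forall_congr' fun m => by simp

theorem monomial_mem_degreeLTMod (m : σ →₀ ℕ) (c : K) :
    monomial m c ∈ degreeLTMod σ I (m.degree + 1) := by
  classical
  intro m' hm'
  rw [coeff_monomial, if_neg]
  · exact I.zero_mem
  · rintro rfl
    omega

theorem exists_mem_degreeLTMod (I : Ideal K) (p : MvPolynomial σ K) :
    ∃ d, p ∈ degreeLTMod σ I d := by
  induction p using MvPolynomial.induction_on' with
  | monomial m c => exact ⟨_, monomial_mem_degreeLTMod m c⟩
  | add p q hp hq =>
    obtain ⟨d, hd⟩ := hp
    obtain ⟨e, he⟩ := hq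
    exact ⟨max d e, add_mem (degreeLTMod_mono (le_max_left d e) hd)
      (degreeLTMod_mono (le_max_right d e) he)⟩

theorem X_mul_mem_degreeLTMod (i : σ) (hp : p ∈ degreeLTMod σ I d) :
    X i * p ∈ degreeLTMod σ I (d + 1) := by
  classical
  intro m hm
  rw [coeff_X_mul']
  split_ifs with hi
  · have hle : Finsupp.single i 1 ≤ m := by
      simpa [Nat.one_le_iff_ne_zero] using hi
    have hdegree := congrArg Finsupp.degree (tsub_add_cancel_of_le hle)
    rw [map_add, Finsupp.degree_single] at hdegree
    exact hp _ (by omega)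
  · exact I.zero_mem

theorem mul_mem_degreeLTMod_zero {q : MvPolynomial σ K} (hq : ∀ m, coeff m q ∈ I)
    (p : MvPolynomial σ K) : q * p ∈ degreeLTMod σ I 0 := by
  intro m _
  exact mem_map_C_iff.1 (Ideal.mul_mem_right p _ (mem_map_C_iff.2 hq)) m

theorem twistedDeriv_mem_degreeLTMod {β : σ → MvPolynomial σ K} {i : σ}
    (hβ : ∀ m, coeff m (β i) ∈ I) (hp : p ∈ degreeLTMod σ I d) :
    twistedDeriv β i p ∈ degreeLTMod σ I d := by
  refine add_mem (fun m hm => ?_) (degreeLTMod_mono d.zero_le (mul_mem_degreeLTMod_zero hβ p))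
  have hcoeff : coeff (m + Finsupp.single i 1) p ∈ I := hp _ (by simpa using by omega)
  simpa [coeff_pderiv] using I.mul_mem_right _ hcoeff

theorem map_monomial_sub_mem_degreeLTMod {ψ : Module.End K (MvPolynomial σ K)}
    {T : σ → Module.End K (MvPolynomial σ K)} (hψ_one : ψ 1 = 1)
    (hψ_X_mul : ∀ i p, ψ (X i * p) = X i * ψ p + T i (ψ p))
    (hT : ∀ i d, ∀ p ∈ degreeLTMod σ I d, T i p ∈ degreeLTMod σ I d) (m : σ →₀ ℕ) :
    ψ (monomial m 1) - monomial m 1 ∈ degreeLTMod σ I m.degree := by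
  induction hd : m.degree generalizing m with
  | zero =>
    obtain rfl : m = 0 := (Finsupp.degree_eq_zero_iff m).1 hd
    simp [monomial_zero', hψ_one]
  | succ d ih =>
    obtain ⟨i, hi⟩ : ∃ i, m i ≠ 0 := by
      simpa using Finsupp.ne_iff.1 (show m ≠ 0 by rintro rfl; simp at hd)
    have hle : Finsupp.single i 1 ≤ m := by
      simpa [Nat.one_le_iff_ne_zero] using hi
    obtain ⟨m', rfl⟩ := exists_add_of_le hle
    obtain rfl : m'.degree = d := by
      rw [map_add, Finsupp.degree_single] at hd
      omega
    have hmonomial : monomial (Finsupp.single i 1 + m') (1 : K) = X i * monomial m' 1 := by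
      rw [X, monomial_mul, one_mul]
    have hψ_mem : ψ (monomial m' 1) ∈ degreeLTMod σ I (m'.degree + 1) := by
      rw [← sub_add_cancel (ψ (monomial m' 1)) (monomial m' 1)]
      exact add_mem (degreeLTMod_mono (Nat.le_succ _) (ih m' rfl)) (monomial_mem_degreeLTMod m' 1)
    rw [hmonomial, hψ_X_mul, add_sub_right_comm, ← mul_sub]
    exact add_mem (X_mul_mem_degreeLTMod i (ih m' rfl)) (hT i _ _ hψ_mem)

theorem map_mem_degreeLTMod_of_map_monomial_mem {E : Module.End K (MvPolynomial σ K)}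
    (hE : ∀ m : σ →₀ ℕ, E (monomial m 1) ∈ degreeLTMod σ I m.degree)
    (hp : p ∈ degreeLTMod σ I (d + 1)) : E p ∈ degreeLTMod σ I d := by
  rw [p.as_sum, map_sum]
  refine sum_mem fun m _ => ?_
  rw [← mul_one (coeff m p), ← smul_eq_mul, ← smul_monomial, map_smul]
  by_cases hm : m.degree ≤ d
  · exact Submodule.smul_mem _ _ (degreeLTMod_mono hm (hE m))
  · refine degreeLTMod_mono d.zero_le ?_
    rw [degreeLTMod_zero]
    exact Submodule.smul_mem_smul (hp m (by omega)) Submodule.mem_top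

theorem pow_map_mem_degreeLTMod_zero {E : Module.End K (MvPolynomial σ K)}
    (hE : ∀ d, ∀ p ∈ degreeLTMod σ I (d + 1), E p ∈ degreeLTMod σ I d)
    (hp : p ∈ degreeLTMod σ I d) : (E ^ d) p ∈ degreeLTMod σ I 0 := by
  induction d generalizing p with
  | zero => simpa using hp
  | succ d ih =>
    rw [pow_succ, Module.End.mul_apply]
    exact ih (hE d p hp)

theorem bijective_of_map_X_mul {ψ : Module.End K (MvPolynomial σ K)}
    {T : σ → Module.End K (MvPolynomial σ K)} (hI : IsNilpotent I) (hψ_one : ψ 1 = 1)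
    (hψ_X_mul : ∀ i p, ψ (X i * p) = X i * ψ p + T i (ψ p))
    (hT : ∀ i d, ∀ p ∈ degreeLTMod σ I d, T i p ∈ degreeLTMod σ I d) :
    Function.Bijective ψ := by
  have hlower (d : ℕ) (p : MvPolynomial σ K) (hp : p ∈ degreeLTMod σ I (d + 1)) :
      (1 - ψ) p ∈ degreeLTMod σ I d := by
    refine map_mem_degreeLTMod_of_map_monomial_mem (fun m => ?_) hp
    rw [LinearMap.sub_apply, Module.End.one_apply, ← neg_sub]
    exact neg_mem (map_monomial_sub_mem_degreeLTMod hψ_one hψ_X_mul hT m)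
  rw [← sub_sub_cancel 1 ψ]
  refine bijective_one_sub_of_forall_exists_pow_apply_mem hI fun p => ?_
  obtain ⟨d, hd⟩ := exists_mem_degreeLTMod I p
  exact ⟨d, degreeLTMod_zero (σ := σ) (I := I) ▸ pow_map_mem_degreeLTMod_zero hlower hd⟩

end DegreeLTMod

theorem exists_isNilpotent_ideal_coeff_mem {ι : Type*} [Finite ι] {β : ι → MvPolynomial σ K}
    (hβ : ∀ i, IsNilpotent (β i)) :
    ∃ I : Ideal K, IsNilpotent I ∧ ∀ i m, coeff m (β i) ∈ I := by
  have hfg : (Ideal.span (⋃ i, ((β i).coeffs : Set K))).FG :=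
    Submodule.fg_span (Set.finite_iUnion fun i => (β i).coeffs.finite_toSet)
  refine ⟨_, (Ideal.FG.isNilpotent_iff_le_nilradical hfg).2 ?_, fun i m => ?_⟩
  · rw [Ideal.span_le, Set.iUnion_subset_iff]
    intro i c hc
    obtain ⟨m, _, rfl⟩ := mem_coeffs_iff.1 hc
    exact isNilpotent_iff.1 (hβ i) m
  · by_cases hm : coeff m (β i) = 0
    · rw [hm]
      exact zero_mem _
    · exact Ideal.subset_span (Set.mem_iUnion.2 ⟨i, coeff_mem_coeffs m hm⟩)

section LinearPart

variable [Fintype σ]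

theorem toMvPolynomial_eq_sum_smul_X (A : Matrix σ σ K) (i : σ) :
    A.toMvPolynomial i = ∑ j, A i j • X j := by
  simp [Matrix.toMvPolynomial, smul_eq_C_mul, C_mul_X_eq_monomial]

theorem pderiv_toMvPolynomial (A : Matrix σ σ K) (i j : σ) :
    pderiv i (A.toMvPolynomial j) = C (A j i) := by
  classical
  simp [toMvPolynomial_eq_sum_smul_X, pderiv_X, Pi.single_apply, smul_eq_C_mul]

variable [DecidableEq σ]

theorem bind₁_toMvPolynomial_bind₁_toMvPolynomial {A B : Matrix σ σ K} (hAB : A * B = 1)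
    (p : MvPolynomial σ K) :
    bind₁ B.toMvPolynomial (bind₁ A.toMvPolynomial p) = p := by
  have hcomp (i : σ) : bind₁ B.toMvPolynomial (A.toMvPolynomial i) = X i := by
    rw [← Matrix.toMvPolynomial_mul, hAB, Matrix.toMvPolynomial_one]
  rw [bind₁_bind₁]
  simp [hcomp]

theorem sum_smul_twistedDeriv_toMvPolynomial_add {A B : Matrix σ σ K} (hBA : B * A = 1)
    (β : σ → MvPolynomial σ K) (i : σ) (p : MvPolynomial σ K) :
    ∑ j, B i j • twistedDeriv (A.toMvPolynomial + β) j p =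
      X i * p + ∑ j, B i j • twistedDeriv β j p := by
  have hX : ∑ j, B i j • A.toMvPolynomial j = X i := by
    rw [← Matrix.toMvPolynomial_one, ← hBA, Matrix.toMvPolynomial_mul,
      toMvPolynomial_eq_sum_smul_X]
    simp
  rw [← hX, Finset.sum_mul, ← Finset.sum_add_distrib]
  refine Finset.sum_congr rfl fun j _ => ?_
  rw [twistedDeriv_apply, twistedDeriv_apply, Pi.add_apply, smul_mul_assoc, ← smul_add]
  congr 1
  ring

theorem exists_isTwistIntertwiner {A : Matrix σ σ K} (hsymm : A.IsSymm)
    (hA : IsUnit A) {β : σ → MvPolynomial σ K}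
    (hclosed : ∀ i j, pderiv i (β j) = pderiv j (β i)) (hnil : ∀ i, IsNilpotent (β i)) :
    ∃ φ : MvPolynomial σ K ≃ₗ[K] MvPolynomial σ K,
      IsTwistIntertwiner (A.toMvPolynomial + β) φ := by
  obtain ⟨φ, hφ_one, hφ_X_mul⟩ :=
    exists_linearMap_map_X_mul_eq_twistedDeriv (α := A.toMvPolynomial + β) fun i j => by
      simp [pderiv_toMvPolynomial, hclosed i j, hsymm.apply]
  obtain ⟨I, hI, hβI⟩ := exists_isNilpotent_ideal_coeff_mem hnil
  obtain ⟨B, hAB, hBA⟩ := isUnit_iff_exists.1 hA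
  have hbind : Function.Bijective (bind₁ B.toMvPolynomial) :=
    Function.bijective_iff_has_inverse.2 ⟨bind₁ A.toMvPolynomial,
      bind₁_toMvPolynomial_bind₁_toMvPolynomial hBA, bind₁_toMvPolynomial_bind₁_toMvPolynomial hAB⟩
  let ψ : Module.End K (MvPolynomial σ K) := φ ∘ₗ (bind₁ B.toMvPolynomial).toLinearMap
  have hψ_X_mul (i : σ) (p : MvPolynomial σ K) :
      ψ (X i * p) = X i * ψ p + (∑ j, B i j • twistedDeriv β j) (ψ p) := by
    calc ψ (X i * p) = ∑ j, B i j • φ (X j * bind₁ B.toMvPolynomial p) := by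
          simp [ψ, toMvPolynomial_eq_sum_smul_X, Finset.sum_mul]
      _ = ∑ j, B i j • twistedDeriv (A.toMvPolynomial + β) j (ψ p) := by
          simp only [hφ_X_mul, ψ, LinearMap.comp_apply, AlgHom.toLinearMap_apply]
      _ = X i * ψ p + (∑ j, B i j • twistedDeriv β j) (ψ p) := by
          simp [sum_smul_twistedDeriv_toMvPolynomial_add hBA]
  have hψ : Function.Bijective ψ := by
    refine bijective_of_map_X_mul hI (by simp [ψ, hφ_one]) hψ_X_mul fun i d p hp => ?_
    rw [LinearMap.sum_apply]
    exact sum_mem fun j _ => Submodule.smul_mem _ _ (twistedDeriv_mem_degreeLTMod (hβI j) hp)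
  exact ⟨LinearEquiv.ofBijective φ ((Function.Bijective.of_comp_iff φ hbind).1 hψ),
    hφ_one, hφ_X_mul⟩

end LinearPart

end Polynomial

section TwistedDeRham

variable {n : ℕ} {K : Type*} [CommRing K]

theorem sgn_mul_eq_koszulSign_smul (s : Finset (Fin n)) (i : Fin n)
    (p : MvPolynomial (Fin n) K) : sgn K s i * p = koszulSign s i • p := by
  simp [sgn, koszulSign, Units.smul_def]

theorem dTwist_eq_koszulD (α : Fin n → MvPolynomial (Fin n) K) :
    dTwist α = koszulD (twistedDeriv α) := by
  refine LinearMap.ext fun ω => funext fun s => ?_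
  rw [koszulD_apply]
  exact Finset.sum_congr rfl fun i _ => sgn_mul_eq_koszulSign_smul s i _

theorem topForm_eq_single : topForm n K = Pi.single Finset.univ 1 := by
  funext s
  rw [topForm, Pi.single_apply]

theorem topForm_mem_cocycles (α : Fin n → MvPolynomial (Fin n) K) :
    topForm n K ∈ cocycles α n := by
  refine ⟨fun s hs => if_neg ?_, LinearMap.mem_ker.2 (funext fun s => ?_)⟩
  · rintro rfl
    simp at hs
  · refine Finset.sum_eq_zero fun i _ => ?_
    have hne : s.erase i ≠ Finset.univ := fun h =>
      Finset.notMem_erase i s (h ▸ Finset.mem_univ i)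
    simp [topForm, hne]

namespace IsTwistIntertwiner

variable {α : Fin n → MvPolynomial (Fin n) K}
  {φ : MvPolynomial (Fin n) K ≃ₗ[K] MvPolynomial (Fin n) K}

theorem formalIntegral_cobounds (hφ : IsTwistIntertwiner α φ) {k : ℕ} {ω : Form n K}
    (hω : ω ∈ cobounds α k) : formalIntegral φ (ω Finset.univ) = 0 := by
  obtain ⟨η, -, rfl⟩ := hω
  rw [dTwist_eq_koszulD, koszulD_apply, map_sum]
  refine Finset.sum_eq_zero fun i _ => ?_
  rw [LinearMap.map_smul_of_tower, hφ.formalIntegral_twistedDeriv, smul_zero]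

theorem sub_smul_topForm_mem_cobounds (hφ : IsTwistIntertwiner α φ) {k : ℕ} {ω : Form n K}
    (hω : ω ∈ cocycles α k) :
    ω - formalIntegral φ (ω Finset.univ) • topForm n K ∈ cobounds α k := by
  obtain ⟨hdeg, hclosed⟩ := Submodule.mem_inf.1 hω
  rw [LinearMap.mem_ker, dTwist_eq_koszulD] at hclosed
  obtain ⟨η, hη, p, rfl, hp⟩ :=
    hφ.commutingRetractions.exists_koszulD_add_single_of_koszulD_eq_zero hdeg hclosed
  have hdη : koszulD (twistedDeriv α) η ∈ cobounds α k := ⟨η, hη, by rw [dTwist_eq_koszulD]⟩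
  have hsingle : Pi.single Finset.univ p = formalIntegral φ p • topForm n K := by
    rw [topForm_eq_single, ← Pi.single_smul, ← hφ.eq_smul_one hp]
  rw [Pi.add_apply, Pi.single_eq_same, map_add, hφ.formalIntegral_cobounds hdη, zero_add, hsingle,
    add_sub_cancel_right]
  exact hdη

theorem subsingleton_Htwist (hφ : IsTwistIntertwiner α φ) {k : ℕ} (hk : k ≠ n) :
    Subsingleton (Htwist α k) := by
  refine Submodule.Quotient.subsingleton_iff.2 (eq_top_iff.2 fun ω _ => ?_)
  have huniv : ω.1 Finset.univ = 0 := ω.2.1 _ (by simpa using hk.symm)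
  simpa [huniv] using hφ.sub_smul_topForm_mem_cobounds ω.2

theorem exists_Htwist_linearEquiv (hφ : IsTwistIntertwiner α φ) :
    ∃ e : Htwist α n ≃ₗ[K] K,
      e (Submodule.Quotient.mk ⟨topForm n K, topForm_mem_cocycles α⟩) = 1 := by
  let ℓ : cocycles α n →ₗ[K] K :=
    formalIntegral φ ∘ₗ LinearMap.proj Finset.univ ∘ₗ (cocycles α n).subtype
  refine exists_quotient_linearEquiv_of_functional (ℓ := ℓ) ?_
    (fun ω hω => hφ.formalIntegral_cobounds (Submodule.mem_comap.1 hω)) fun ω => ?_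
  · simp [ℓ, topForm, hφ.formalIntegral_one]
  · exact Submodule.mem_comap.2 (hφ.sub_smul_topForm_mem_cobounds ω.2)

end IsTwistIntertwiner

theorem perturbed_quadratic_twisted_deRham_cohomology_general {A : Matrix (Fin n) (Fin n) K}
    (hsymm : A.IsSymm) (hA : IsUnit A) {β : Fin n → MvPolynomial (Fin n) K}
    (hclosed : ∀ i j, pderiv i (β j) = pderiv j (β i)) (hnil : ∀ i, IsNilpotent (β i)) :
    ∃ h : topForm n K ∈ cocycles (A.toMvPolynomial + β) n,
      (∀ k : ℕ, k ≠ n → Subsingleton (Htwist (A.toMvPolynomial + β) k)) ∧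
      Nonempty (Htwist (A.toMvPolynomial + β) n ≃ₗ[K] K) ∧
      (∀ y : Htwist (A.toMvPolynomial + β) n, ∃ r : K,
        y = r • Submodule.Quotient.mk
          (⟨topForm n K, h⟩ : cocycles (A.toMvPolynomial + β) n)) := by
  obtain ⟨φ, hφ⟩ := exists_isTwistIntertwiner hsymm hA hclosed hnil
  obtain ⟨e, he⟩ := hφ.exists_Htwist_linearEquiv
  refine ⟨topForm_mem_cocycles _, fun k hk => hφ.subsingleton_Htwist hk, ⟨e⟩,
    fun y => ⟨e y, e.injective ?_⟩⟩
  rw [map_smul, he, smul_eq_mul, mul_one]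

end TwistedDeRham

theorem isNilpotent_lamRN (R : Type*) [CommRing R] (N : ℕ) : IsNilpotent (lamRN R N) := by
  refine ⟨N, ?_⟩
  rw [lamRN, ← map_pow]
  exact Ideal.Quotient.eq_zero_iff_mem.2 (Ideal.mem_span_singleton_self _)

theorem perturbedDf_eq_toMvPolynomial_add {n : ℕ} {R : Type*} [CommRing R] (N : ℕ)
    (A : Matrix (Fin n) (Fin n) R) (V : MvPolynomial (Fin n) R) :
    perturbedDf N A V = (A.map (toRN R N)).toMvPolynomial +
      fun a => C (lamRN R N) * pderiv a (MvPolynomial.map (toRN R N) V) := by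
  funext a
  simp [perturbedDf, toMvPolynomial_eq_sum_smul_X, smul_eq_C_mul]

/-- For an invertible symmetric matrix `A` over a commutative
ring `R`, an arbitrary polynomial `V`, and the perturbed function
`f = ½xᵗAx + λV` over `R_N = R[λ]/(λ^N)`, the twisted de Rham cohomology
`H^k_f(R_N)` vanishes for `k ≠ n`, and `H^n_f(R_N)` is isomorphic to `R_N`,
generated by the class of `dx_1 ∧ ⋯ ∧ dx_n`. -/
theorem perturbed_quadratic_twisted_deRham_cohomology
    {R : Type*} [CommRing R] {n N : ℕ} (hn : 0 < n) (hN : 0 < N)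
    (A B : Matrix (Fin n) (Fin n) R) (hsymm : A.IsSymm)
    (hAB : A * B = 1) (hBA : B * A = 1) (V : MvPolynomial (Fin n) R) :
    ∃ h : topForm n (RN R N) ∈ cocycles (perturbedDf N A V) n,
      (∀ k : ℕ, k ≠ n → Subsingleton (Htwist (perturbedDf N A V) k)) ∧
      Nonempty (Htwist (perturbedDf N A V) n ≃ₗ[RN R N] RN R N) ∧
      (∀ y : Htwist (perturbedDf N A V) n, ∃ r : RN R N,
        y = r • Submodule.Quotient.mk
          (⟨topForm n (RN R N), h⟩ : cocycles (perturbedDf N A V) n)) := by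
  rw [perturbedDf_eq_toMvPolynomial_add]
  exact perturbed_quadratic_twisted_deRham_cohomology_general (hsymm.map _)
    ((isUnit_iff_exists.2 ⟨B, hAB, hBA⟩).map (toRN R N).mapMatrix)
    (fun i j => by simp only [pderiv_C_mul, pderiv_comm i j])
    fun i => (Commute.all _ _).isNilpotent_mul_right ((isNilpotent_lamRN R N).map C)

end
end

section
/- Let A be an n×n symmetric negative definite matrix with integer entries that is invertible over ℤ (i.e., A^{-1} also has integer entries), and let g, h ∈ ℤ[x_1,…,x_n]. For each k ≥ 0 define real numbers a_k = (1/k!)∫_{ℝⁿ} g(x)·h(x)^k·e^{½xᵗAx} dx and b_k = (1/k!)∫_{ℝⁿ} h(x)^k·e^{½xᵗAx} dx, so that Σ_k a_k λ^k and Σ_k b_k λ^k are the perturbative expansions of ∫ g·e^{½xᵗAx+λh} dx and ∫ e^{½xᵗAx+λh} dx as formal power series in λ. Then b_0 ≠ 0, and every coefficient of the quotient formal power series (Σ_k a_k λ^k)·(Σ_k b_k λ^k)^{-1} ∈ ℝ[[λ]] is an integer (lies in the image of ℤ in ℝ). -/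
/-!
Integration by parts against the Gaussian weight expresses the integral of `x_i p` as the
combination of the integrals of the `∂_j p` with coefficients the entries of the covariance matrix
`-A⁻¹`, which are integers. Applied to `p = g h ^ k / k!`, it says that the perturbative series
`F g` satisfies `F (x_i g) = ∑ j, (-A⁻¹) i j (F (∂_j g) + λ F (g ∂_j h))`. Lowering the degree of
`g` in this way gives `F g = r F 1 + λ F g'` with `r` an integer and `g'` an integer polynomial.
Iterating on `g'` yields the coefficients of `F g / F 1` one after the other.
-/

open MvPolynomial MeasureTheory

noncomputable section

/-- The quadratic function `f(x) = ½xᵗAx` on `ℝⁿ` associated to an integer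
matrix `A`. -/
def quadFunZ {n : ℕ} (A : Matrix (Fin n) (Fin n) ℤ) (x : Fin n → ℝ) : ℝ :=
  (∑ i, ∑ j, (A i j : ℝ) * x i * x j) / 2

/-- The `k`-th coefficient `(1/k!)∫ g·h^k·e^{½xᵗAx} dx` of the perturbative
expansion of `∫ g e^{½xᵗAx+λh} dx` in powers of `λ`. -/
def pertCoeff {n : ℕ} (A : Matrix (Fin n) (Fin n) ℤ)
    (g h : MvPolynomial (Fin n) ℤ) (k : ℕ) : ℝ :=
  ((Nat.factorial k : ℝ)⁻¹) *
    ∫ x : Fin n → ℝ,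
      eval x (MvPolynomial.map (Int.castRingHom ℝ) g) *
        (eval x (MvPolynomial.map (Int.castRingHom ℝ) h)) ^ k *
        Real.exp (quadFunZ A x)

open scoped Matrix MatrixOrder

section Algebra

variable {ι R K : Type*} [CommSemiring R] [Field K] [Algebra R K]

/-- A linear functional `I` on polynomials is Gaussian with covariance matrix `S` if it satisfies
the Schwinger-Dyson equations `I (x_i p) = ∑ j, S i j I (∂_j p)`. No normalization of `I 1` is
imposed. -/
def IsGaussianFunctional [Fintype ι] (S : Matrix ι ι R) (I : MvPolynomial ι R →ₗ[R] K) : Prop :=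
  ∀ i p, I (X i * p) = ∑ j, S i j • I (pderiv j p)

/-- The perturbative expansion `∑ k, I (g h ^ k) / k! λ ^ k` of `I (g exp (λ h))` as a formal power
series in `λ`, seen as a linear function of the insertion `g`. -/
def perturbativeSeries (I : MvPolynomial ι R →ₗ[R] K) (h : MvPolynomial ι R) :
    MvPolynomial ι R →ₗ[R] PowerSeries K where
  toFun g := PowerSeries.mk fun k => (k.factorial : K)⁻¹ * I (g * h ^ k)
  map_add' p q := by ext k; simp [add_mul, mul_add]
  map_smul' r p := by ext k; simp

@[simp]
lemma coeff_perturbativeSeries (I : MvPolynomial ι R →ₗ[R] K) (h g : MvPolynomial ι R) (k : ℕ) :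
    PowerSeries.coeff k (perturbativeSeries I h g) = (k.factorial : K)⁻¹ * I (g * h ^ k) :=
  PowerSeries.coeff_mk k fun k => (k.factorial : K)⁻¹ * I (g * h ^ k)

lemma coeff_perturbativeSeries_pderiv_add [CharZero K] (I : MvPolynomial ι R →ₗ[R] K)
    (h g : MvPolynomial ι R) (j : ι) (k : ℕ) :
    PowerSeries.coeff k (perturbativeSeries I h (pderiv j g) +
      PowerSeries.X * perturbativeSeries I h (g * pderiv j h)) =
      (k.factorial : K)⁻¹ * I (pderiv j (g * h ^ k)) := by
  cases k with
  | zero =>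
    rw [map_add, PowerSeries.coeff_zero_X_mul, coeff_perturbativeSeries, pow_zero, mul_one, mul_one,
      add_zero]
  | succ k =>
    have leibniz : pderiv j (g * h ^ (k + 1)) =
        pderiv j g * h ^ (k + 1) + (k + 1) • (g * pderiv j h * h ^ k) := by
      rw [pderiv_mul, pderiv_pow, nsmul_eq_mul, Nat.add_sub_cancel]
      ring
    have factorial_succ_inv : ((k + 1).factorial : K)⁻¹ * (k + 1 : ℕ) = (k.factorial : K)⁻¹ := by
      rw [Nat.factorial_succ, Nat.cast_mul, mul_inv_rev,
        inv_mul_cancel_right₀ (Nat.cast_ne_zero.2 k.succ_ne_zero)]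
    rw [leibniz, map_add, PowerSeries.coeff_succ_X_mul, coeff_perturbativeSeries,
      coeff_perturbativeSeries, map_add, map_nsmul, nsmul_eq_mul, mul_add, ← mul_assoc,
      factorial_succ_inv]

namespace IsGaussianFunctional

variable [CharZero K] [Fintype ι] {S : Matrix ι ι R} {I : MvPolynomial ι R →ₗ[R] K}

lemma perturbativeSeries_X_mul (hI : IsGaussianFunctional S I) (h g : MvPolynomial ι R) (i : ι) :
    perturbativeSeries I h (X i * g) =
      ∑ j, S i j • (perturbativeSeries I h (pderiv j g) +
        PowerSeries.X * perturbativeSeries I h (g * pderiv j h)) := by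
  ext k
  simp only [map_sum, PowerSeries.coeff_smul, coeff_perturbativeSeries_pderiv_add,
    coeff_perturbativeSeries, mul_assoc, hI i, Finset.mul_sum, mul_smul_comm]

lemma exists_perturbativeSeries_eq (hI : IsGaussianFunctional S I) (h g : MvPolynomial ι R) :
    ∃ (r : R) (g' : MvPolynomial ι R), perturbativeSeries I h g =
      r • perturbativeSeries I h 1 + PowerSeries.X * perturbativeSeries I h g' := by
  let F := perturbativeSeries I h
  let L : Submodule R (PowerSeries K) := (LinearMap.range F).map (LinearMap.mulLeft R PowerSeries.X)
  have X_mul_mem (p : MvPolynomial ι R) : PowerSeries.X * F p ∈ L :=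
    Submodule.mem_map_of_mem (LinearMap.mem_range_self F p)
  have monomial_mem (s : ι →₀ ℕ) (a : R) : F (monomial s a) ∈ R ∙ F 1 ⊔ L := by
    induction s using WellFoundedLT.induction generalizing a with
    | ind s ih =>
      by_cases hs : s = 0
      · rw [hs, monomial_zero', ← mul_one (C a), ← smul_eq_C_mul, map_smul]
        exact Submodule.mem_sup_left (Submodule.smul_mem _ _ (Submodule.mem_span_singleton_self _))
      obtain ⟨i, hi⟩ := Finsupp.ne_iff.1 hs
      obtain ⟨t, rfl⟩ : ∃ t, s = Finsupp.single i 1 + t :=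
        ⟨_, ((add_comm _ _).trans (Finsupp.sub_add_single_one_cancel hi)).symm⟩
      have factor : monomial (Finsupp.single i 1 + t) a = X i * monomial t a := by
        rw [X, monomial_mul, one_mul]
      have sub_lt (j : ι) : t - Finsupp.single j 1 < Finsupp.single i 1 + t :=
        tsub_le_self.trans_lt (lt_add_of_pos_left t (pos_iff_ne_zero.2 (by simp)))
      rw [factor, hI.perturbativeSeries_X_mul]
      refine Submodule.sum_mem _ fun j _ => Submodule.smul_mem _ _ (Submodule.add_mem _ ?_ ?_)
      · rw [pderiv_monomial]
        exact ih _ (sub_lt j) _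
      · exact Submodule.mem_sup_right (X_mul_mem _)
  have mem : F g ∈ R ∙ F 1 ⊔ L := by
    rw [g.as_sum, map_sum]
    exact Submodule.sum_mem _ fun s _ => monomial_mem s _
  obtain ⟨_, hr, _, ⟨_, ⟨g', rfl⟩, rfl⟩, hg⟩ := Submodule.mem_sup.1 mem
  obtain ⟨r, rfl⟩ := Submodule.mem_span_singleton.1 hr
  exact ⟨r, g', hg.symm⟩

theorem coeff_perturbativeSeries_mul_inv_mem_range (hI : IsGaussianFunctional S I) (hI₁ : I 1 ≠ 0)
    (h g : MvPolynomial ι R) (m : ℕ) :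
    PowerSeries.coeff m (perturbativeSeries I h g * (perturbativeSeries I h 1)⁻¹) ∈
      Set.range (algebraMap R K) := by
  have mul_inv : perturbativeSeries I h 1 * (perturbativeSeries I h 1)⁻¹ = 1 := by
    apply PowerSeries.mul_inv_cancel
    simpa [← PowerSeries.coeff_zero_eq_constantCoeff_apply] using hI₁
  induction m generalizing g with
  | zero =>
    obtain ⟨r, g', hg⟩ := hI.exists_perturbativeSeries_eq h g
    refine ⟨r, ?_⟩
    rw [hg, add_mul, smul_mul_assoc, mul_inv, mul_assoc]
    simp [Algebra.smul_def, PowerSeries.algebraMap_apply]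
  | succ m ih =>
    obtain ⟨r, g', hg⟩ := hI.exists_perturbativeSeries_eq h g
    obtain ⟨z, hz⟩ := ih g'
    refine ⟨z, ?_⟩
    rw [hg, add_mul, smul_mul_assoc, mul_inv, mul_assoc, map_add, PowerSeries.coeff_succ_X_mul, hz]
    simp [PowerSeries.coeff_one]

end IsGaussianFunctional

end Algebra

section Derivative

variable {ι R 𝕜 : Type*} [CommSemiring R] [NontriviallyNormedField 𝕜] [Algebra R 𝕜]

lemma continuous_mvPolynomial_aeval (p : MvPolynomial ι R) :
    Continuous fun x : ι → 𝕜 => aeval x p := by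
  simpa only [aeval_def, eval₂_eq_eval_map] using! (map (algebraMap R 𝕜) p).continuous_eval

lemma hasLineDerivAt_mvPolynomial_aeval [Fintype ι] (p : MvPolynomial ι R) (x v : ι → 𝕜) :
    HasLineDerivAt 𝕜 (fun x : ι → 𝕜 => aeval x p) (∑ j, v j * aeval x (pderiv j p)) x v := by
  classical
  unfold HasLineDerivAt
  induction p using MvPolynomial.induction_on with
  | C a => simpa using hasDerivAt_const 0 (algebraMap R 𝕜 a)
  | add p q hp hq => simpa only [map_add, mul_add, Finset.sum_add_distrib] using! hp.add hq
  | mul_X p i hp =>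
    have coordinate : HasDerivAt (fun t : 𝕜 => (x + t • v) i) (v i) 0 := by
      simpa using! ((hasDerivAt_id (0 : 𝕜)).mul_const (v i)).const_add (x i)
    simp only [map_mul, aeval_X]
    refine (hp.mul coordinate).congr_deriv ?_
    simp [pderiv_X, Pi.single_apply, mul_add, Finset.sum_add_distrib, Finset.mul_sum,
      apply_ite (aeval x), mul_comm, mul_left_comm, add_comm]

end Derivative

section Gaussian

variable {ι R : Type*} [Fintype ι] [CommSemiring R] [Algebra R ℝ] {P : Matrix ι ι ℝ}

/-- The unnormalized centred Gaussian density `exp (-½ xᵗPx)` with precision matrix `P`. -/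
def gaussianWeight (P : Matrix ι ι ℝ) (x : ι → ℝ) : ℝ :=
  Real.exp (-(x ⬝ᵥ P *ᵥ x) / 2)

lemma exists_pos_mul_dotProduct_self_le (hP : P.PosDef) :
    ∃ c > 0, ∀ x : ι → ℝ, c * (x ⬝ᵥ x) ≤ x ⬝ᵥ P *ᵥ x := by
  classical
  cases isEmpty_or_nonempty ι
  · exact ⟨1, one_pos, by simp⟩
  obtain ⟨c, hc, hle⟩ := (CFC.exists_pos_algebraMap_le_iff hP.isHermitian.isSelfAdjoint).2
    fun _ => hP.isStrictlyPositive.spectrum_pos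
  refine ⟨c, hc, fun x => ?_⟩
  simpa [Algebra.algebraMap_eq_smul_one, Matrix.sub_mulVec, Matrix.smul_mulVec, dotProduct_sub]
    using (Matrix.le_iff.1 hle).dotProduct_mulVec_nonneg x

lemma integrable_aeval_mul_exp_neg_mul_dotProduct_self {c : ℝ} (hc : 0 < c) (p : MvPolynomial ι R) :
    Integrable fun x : ι → ℝ => aeval x p * Real.exp (-c * (x ⬝ᵥ x)) := by
  induction p using MvPolynomial.induction_on' with
  | add p q hp hq => simpa only [map_add, add_mul] using! hp.add hq
  | monomial s a =>
    have factors (i : ι) : Integrable fun t : ℝ => t ^ s i * Real.exp (-c * t ^ 2) := by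
      simpa only [Real.rpow_natCast] using
        integrable_rpow_mul_exp_neg_mul_sq hc (neg_one_lt_zero.trans_le (Nat.cast_nonneg (s i)))
    refine ((Integrable.fintype_prod factors).const_mul (algebraMap R ℝ a)).congr
      (.of_forall fun x => ?_)
    simp only [dotProduct, ← sq, aeval_monomial, Finsupp.prod_fintype, pow_zero, implies_true,
      Finset.prod_mul_distrib, Finset.mul_sum, Real.exp_sum, mul_assoc]

lemma continuous_gaussianWeight (P : Matrix ι ι ℝ) : Continuous (gaussianWeight P) := by
  unfold gaussianWeight
  fun_prop

lemma integrable_aeval_mul_gaussianWeight (hP : P.PosDef) (p : MvPolynomial ι R) :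
    Integrable fun x : ι → ℝ => aeval x p * gaussianWeight P x := by
  obtain ⟨c, hc, hle⟩ := exists_pos_mul_dotProduct_self_le hP
  refine (integrable_aeval_mul_exp_neg_mul_dotProduct_self (half_pos hc) p).mono
    ((continuous_mvPolynomial_aeval p).mul (continuous_gaussianWeight P)).aestronglyMeasurable
    (.of_forall fun x => ?_)
  rw [norm_mul, norm_mul, gaussianWeight, Real.norm_of_nonneg (Real.exp_pos _).le,
    Real.norm_of_nonneg (Real.exp_pos _).le]
  gcongr
  linarith [hle x]

lemma hasLineDerivAt_gaussianWeight (hP : P.IsSymm) (x v : ι → ℝ) :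
    HasLineDerivAt ℝ (gaussianWeight P) (-(v ᵥ* P ⬝ᵥ x) * gaussianWeight P x) x v := by
  classical
  have apply_eq (y : ι → ℝ) : P.toQuadraticForm' y = y ⬝ᵥ P *ᵥ y :=
    Matrix.toLinearMap₂'_apply' P y y
  have polar_eq : QuadraticMap.polar P.toQuadraticForm' x v = 2 * (v ᵥ* P ⬝ᵥ x) := by
    have swap : x ⬝ᵥ P *ᵥ v = v ᵥ* P ⬝ᵥ x := by
      rw [dotProduct_comm, ← Matrix.vecMul_transpose, hP.eq]
    simp only [QuadraticMap.polar, apply_eq, Matrix.mulVec_add, add_dotProduct, dotProduct_add,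
      swap, Matrix.dotProduct_mulVec v]
    ring
  have quadratic := P.toQuadraticForm'.hasLineDerivAt x v
  simp only [HasLineDerivAt, polar_eq, apply_eq] at quadratic
  unfold HasLineDerivAt gaussianWeight
  refine (quadratic.neg.div_const 2).exp.congr_deriv ?_
  simp only [Pi.neg_apply, zero_smul, add_zero]
  ring

variable (R) in
/-- The Gaussian integral `p ↦ ∫ p(x) exp (-½ xᵗPx) dx` on polynomials over `R`; positive
definiteness of `P` makes it linear. -/
def gaussianIntegral (hP : P.PosDef) : MvPolynomial ι R →ₗ[R] ℝ where
  toFun p := ∫ x : ι → ℝ, aeval x p * gaussianWeight P x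
  map_add' p q := by
    simp only [map_add, add_mul]
    exact integral_add (integrable_aeval_mul_gaussianWeight hP p)
      (integrable_aeval_mul_gaussianWeight hP q)
  map_smul' r p := by
    simp only [map_smul, Algebra.smul_def r (_ : ℝ), mul_assoc, integral_const_mul,
      RingHom.id_apply]

lemma gaussianIntegral_apply (hP : P.PosDef) (p : MvPolynomial ι R) :
    gaussianIntegral R hP p = ∫ x : ι → ℝ, aeval x p * gaussianWeight P x :=
  rfl

lemma gaussianIntegral_one_pos (hP : P.PosDef) : 0 < gaussianIntegral R hP 1 := by
  have integrable := integrable_aeval_mul_gaussianWeight hP (1 : MvPolynomial ι R)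
  simp only [gaussianIntegral_apply, map_one, one_mul] at integrable ⊢
  exact integral_exp_pos integrable

theorem isGaussianFunctional_gaussianIntegral [DecidableEq ι] (hP : P.PosDef) {S : Matrix ι ι R}
    (hS : S.map (algebraMap R ℝ) * P = 1) :
    IsGaussianFunctional S (gaussianIntegral R hP) := by
  intro i p
  let v : ι → ℝ := S.map (algebraMap R ℝ) i
  let p' : MvPolynomial ι R := ∑ j, S i j • pderiv j p
  have weight_deriv (x : ι → ℝ) :
      HasLineDerivAt ℝ (gaussianWeight P) (-(x i) * gaussianWeight P x) x v := by
    have row_dotProduct : v ᵥ* P ⬝ᵥ x = x i := by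
      rw [← Matrix.mul_apply_eq_vecMul, hS]
      exact congrFun (Matrix.one_mulVec x) i
    simpa only [row_dotProduct] using
      hasLineDerivAt_gaussianWeight (Matrix.isHermitian_iff_isSymm.1 hP.isHermitian) x v
  have poly_deriv (x : ι → ℝ) :
      HasLineDerivAt ℝ (fun x : ι → ℝ => aeval x p) (aeval x p') x v := by
    simpa [p', v, Algebra.smul_def] using hasLineDerivAt_mvPolynomial_aeval p x v
  have integrable_weight_deriv :
      Integrable fun x : ι → ℝ => aeval x p * (-(x i) * gaussianWeight P x) := by
    refine (integrable_aeval_mul_gaussianWeight hP (X i * p)).neg.congr (.of_forall fun x => ?_)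
    simp only [Pi.neg_apply, map_mul, aeval_X]
    ring
  have by_parts := integral_bilinear_hasLineDerivAt_right_eq_neg_left_of_integrable
    (B := ContinuousLinearMap.mul ℝ ℝ) (integrable_aeval_mul_gaussianWeight hP p')
    integrable_weight_deriv (integrable_aeval_mul_gaussianWeight hP p)
    (fun x _ => poly_deriv x) (fun x _ => weight_deriv x)
  simp only [ContinuousLinearMap.mul_apply'] at by_parts
  calc gaussianIntegral R hP (X i * p)
      = -∫ x : ι → ℝ, aeval x p * (-(x i) * gaussianWeight P x) := by
        rw [gaussianIntegral_apply, ← integral_neg]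
        simp only [map_mul, aeval_X]
        congr! 2 with x
        ring
    _ = gaussianIntegral R hP p' := by rw [by_parts, neg_neg, gaussianIntegral_apply]
    _ = ∑ j, S i j • gaussianIntegral R hP (pderiv j p) := by simp only [p', map_sum, map_smul]

theorem perturbative_quotient_integrality_general [DecidableEq ι] (hP : P.PosDef)
    {S : Matrix ι ι R} (hS : S.map (algebraMap R ℝ) * P = 1) (g h : MvPolynomial ι R) :
    PowerSeries.coeff 0 (perturbativeSeries (gaussianIntegral R hP) h 1) ≠ 0 ∧
    ∀ m : ℕ, PowerSeries.coeff m (perturbativeSeries (gaussianIntegral R hP) h g *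
      (perturbativeSeries (gaussianIntegral R hP) h 1)⁻¹) ∈ Set.range (algebraMap R ℝ) := by
  have one_ne_zero := (gaussianIntegral_one_pos (R := R) hP).ne'
  exact ⟨by simpa using one_ne_zero, (isGaussianFunctional_gaussianIntegral hP
    hS).coeff_perturbativeSeries_mul_inv_mem_range one_ne_zero h g⟩

end Gaussian

lemma exp_quadFunZ {n : ℕ} (A : Matrix (Fin n) (Fin n) ℤ) (x : Fin n → ℝ) :
    Real.exp (quadFunZ A x) = gaussianWeight (-(A.map fun z : ℤ => (z : ℝ))) x := by
  simp [quadFunZ, gaussianWeight, dotProduct, Matrix.mulVec, Finset.mul_sum, mul_left_comm,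
    mul_comm]

lemma pertCoeff_eq_coeff {n : ℕ} {A : Matrix (Fin n) (Fin n) ℤ}
    (hneg : (-(A.map (fun z : ℤ => (z : ℝ)))).PosDef) (g h : MvPolynomial (Fin n) ℤ) (k : ℕ) :
    pertCoeff A g h k =
      PowerSeries.coeff k (perturbativeSeries (gaussianIntegral ℤ hneg) h g) := by
  simp only [coeff_perturbativeSeries, gaussianIntegral_apply, pertCoeff, exp_quadFunZ, map_mul,
    map_pow, aeval_def, eval_map, algebraMap_int_eq]

lemma mk_pertCoeff {n : ℕ} {A : Matrix (Fin n) (Fin n) ℤ}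
    (hneg : (-(A.map (fun z : ℤ => (z : ℝ)))).PosDef) (g h : MvPolynomial (Fin n) ℤ) :
    PowerSeries.mk (pertCoeff A g h) = perturbativeSeries (gaussianIntegral ℤ hneg) h g :=
  PowerSeries.ext fun k => (PowerSeries.coeff_mk k _).trans (pertCoeff_eq_coeff hneg g h k)

/-- Let `A` be an integer symmetric matrix, negative definite
over `ℝ` and invertible over `ℤ`, and let `g, h ∈ ℤ[x_1,…,x_n]`.  With
`a_k = (1/k!)∫ g·h^k·e^{½xᵗAx} dx` and `b_k = (1/k!)∫ h^k·e^{½xᵗAx} dx` the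
coefficients of the perturbative expansions of `∫ g·e^{½xᵗAx+λh} dx` and
`∫ e^{½xᵗAx+λh} dx`, one has `b_0 ≠ 0` and every coefficient of the quotient
`(Σ a_k λ^k)·(Σ b_k λ^k)⁻¹ ∈ ℝ[[λ]]` is an integer. -/
theorem perturbative_quotient_integrality {n : ℕ} (hn : 0 < n)
    (A : Matrix (Fin n) (Fin n) ℤ) (hsymm : A.IsSymm)
    (hneg : (-(A.map (fun z : ℤ => (z : ℝ)))).PosDef)
    (hinv : ∃ B : Matrix (Fin n) (Fin n) ℤ, A * B = 1 ∧ B * A = 1)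
    (g h : MvPolynomial (Fin n) ℤ) :
    pertCoeff A 1 h 0 ≠ 0 ∧
    ∀ m : ℕ, ∃ z : ℤ,
      PowerSeries.coeff (R := ℝ) m
        (PowerSeries.mk (pertCoeff A g h) *
          (PowerSeries.mk (pertCoeff A 1 h))⁻¹) = (z : ℝ) := by
  obtain ⟨B, -, hBA⟩ := hinv
  have hS : (-B).map (algebraMap ℤ ℝ) * -(A.map fun z : ℤ => (z : ℝ)) = 1 := by
    calc (-B).map (algebraMap ℤ ℝ) * -(A.map fun z : ℤ => (z : ℝ))
        = (algebraMap ℤ ℝ).mapMatrix (-B * -A) := by rw [map_mul, map_neg _ A]; rfl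
      _ = 1 := by rw [neg_mul_neg, hBA, map_one]
  simpa only [pertCoeff_eq_coeff hneg, mk_pertCoeff hneg, Set.mem_range, eq_intCast, eq_comm] using
    perturbative_quotient_integrality_general hneg hS g h

end
end
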